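/- arXiv:2407.16163 — 2 statements merged into one kernel-verified Lean document; each statement's English description precedes it below -/
import Mathlib

section
/- Let K be a finite set with |K| = γ ≥ 2, let a_k (k ∈ K) be nonzero complex numbers, and let g_k (k ∈ K) be entire functions, none identically zero, satisfying Σ_{k∈K} a_k g_k^d = 0 identically, with d > γ(γ−2). Then there exist distinct indices i, j ∈ K such that g_i/g_j is a nonzero constant. -/
/-!
A minimal linearly dependent subfamily of the powers `g k ^ d` gives, after rescaling, entire
functions `F 0, …, F n` with `∑ k, F k ^ d = 0` such that all but one of the powers are linearly
independent, whence their Wronskian does not vanish identically. In Cartan's second main theorem for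
the curve `[F 0 ^ d : … : F n ^ d]` the zeros are counted only up to multiplicity `n - 1`, although
each has multiplicity at least `d`. This bounds `d - (n - 1) * (n + 1)` times the order function of
`[F 0 : … : F n]` by the error term.

The error term is controlled without exceptional sets as follows. By Borel's growth lemma, a
monotone function bounded by its own error term is `O(log r)`, so the quotients `F k / F q` have
characteristic `O(log r)`. Substituting `z = exp w` beforehand makes them periodic, and a
nonconstant periodic meromorphic function has characteristic growing at least linearly: it takes
some value at all points `z₀ + 2πi m`.
-/

open Filter Topology Metric Set Real Function.locallyFinsuppWithin MeromorphicOn ValueDistribution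

/-! ### Borel's growth lemma -/

/-- The shape of the error terms of Nevanlinna theory: an inequality between quantities at the
radius `r` costs a multiple of `nevanlinnaError t r R`, where `t` is the value of the characteristic
function at a larger radius `R`. -/
noncomputable def nevanlinnaError (t r R : ℝ) : ℝ := 1 + log⁺ t + log⁺ (1 / (R - r)) + log⁺ R

lemma one_le_nevanlinnaError (t r R : ℝ) : 1 ≤ nevanlinnaError t r R := by
  unfold nevanlinnaError
  linarith [posLog_nonneg (x := t), posLog_nonneg (x := 1 / (R - r)), posLog_nonneg (x := R)]

lemma posLog_le_div_add_log {x K : ℝ} (hx : 0 ≤ x) (hK : 1 ≤ K) : log⁺ x ≤ x / K + log K := by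
  have hK₀ : 0 < K := by linarith
  calc log⁺ x = log⁺ (x / K * K) := by rw [div_mul_cancel₀ _ hK₀.ne']
    _ ≤ log⁺ (x / K) + log⁺ K := posLog_mul
    _ ≤ x / K + log K := by
      rw [posLog_eq_log (hK.trans (le_abs_self K))]
      gcongr
      exact max_le (by positivity) (log_le_self (by positivity))

lemma le_of_le_mul_add_posLog {x a C : ℝ} (hx : 0 ≤ x) (hC : 0 ≤ C) (h : x ≤ C * (a + log⁺ x)) :
    x ≤ 2 * C * (a + log (2 * (C + 1))) := by
  have hlog : C * log⁺ x ≤ C * (x / (2 * (C + 1)) + log (2 * (C + 1))) := by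
    gcongr
    exact posLog_le_div_add_log hx (by linarith)
  have hhalf : C * (x / (2 * (C + 1))) ≤ x / 2 := by
    rw [mul_div_assoc', div_le_iff₀ (by positivity)]
    nlinarith
  linarith

lemma mul_posLog_inv_le_one {x : ℝ} (hx : 0 < x) : x * log⁺ (1 / x) ≤ 1 := by
  have h : log⁺ (1 / x) ≤ 1 / x := max_le (by positivity) (log_le_self (by positivity))
  calc x * log⁺ (1 / x) ≤ x * (1 / x) := by gcongr
    _ = 1 := mul_one_div_cancel hx.ne'

/-- The radius `R` is taken halfway between `r` and `ρ`. -/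
lemma sub_mul_le_of_le_nevanlinnaError {σ : ℝ → ℝ} {C M r ρ : ℝ} (hC : 0 ≤ C) (hr : 1 ≤ r)
    (hrρ : r < ρ) (hρ : ρ ≤ r + 1) (hσ : ∀ R, r ≤ R → 0 ≤ σ R)
    (h : ∀ R, r < R → R < ρ → σ r ≤ C * nevanlinnaError (σ R) r R)
    (hM : ∀ R, r ≤ R → R < ρ → (ρ - R) * σ R ≤ M) :
    (ρ - r) * σ r ≤ C * (5 + log⁺ (2 * M) + log ρ) := by
  have hx : 0 < ρ - r := by linarith
  have hx₁ : ρ - r ≤ 1 := by linarith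
  set R := (r + ρ) / 2 with hR
  have hgap_eq : R - r = (ρ - r) / 2 := by rw [hR]; ring
  have hlog2 : log⁺ 2 ≤ 1 := by
    rw [posLog_eq_log (by norm_num)]
    linarith [log_two_lt_d9]
  have hσR : log⁺ (σ R) ≤ log⁺ (2 * M) + log⁺ (1 / (ρ - r)) := by
    have hle : σ R ≤ 2 * M * (1 / (ρ - r)) := by
      rw [mul_one_div, le_div_iff₀ hx]
      have := hM R (by linarith) (by linarith)
      rw [show ρ - R = (ρ - r) / 2 by rw [hR]; ring] at this
      linarith
    exact (posLog_le_posLog (hσ R (by linarith)) hle).trans posLog_mul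
  have hgap : log⁺ (1 / (R - r)) ≤ 1 + log⁺ (1 / (ρ - r)) := by
    rw [show 1 / (R - r) = 2 * (1 / (ρ - r)) by rw [hgap_eq, one_div_div, mul_one_div]]
    exact posLog_mul.trans (by gcongr)
  have hlogR : log⁺ R ≤ log ρ := by
    rw [← posLog_eq_log (x := ρ) (by rw [abs_of_pos] <;> linarith)]
    exact posLog_le_posLog (by linarith) (by linarith)
  have hpos : 0 ≤ 3 + log⁺ (2 * M) + log ρ := by
    linarith [posLog_nonneg (x := 2 * M), posLog_nonneg (x := R)]
  calc (ρ - r) * σ r ≤ (ρ - r) * (C * nevanlinnaError (σ R) r R) := by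
        gcongr
        exact h R (by linarith) (by linarith)
    _ ≤ (ρ - r) * (C * (3 + log⁺ (2 * M) + log ρ + 2 * log⁺ (1 / (ρ - r)))) := by
        gcongr
        unfold nevanlinnaError
        linarith
    _ = C * ((ρ - r) * (3 + log⁺ (2 * M) + log ρ) + 2 * ((ρ - r) * log⁺ (1 / (ρ - r)))) := by ring
    _ ≤ C * (1 * (3 + log⁺ (2 * M) + log ρ) + 2 * 1) := by
        gcongr
        exact mul_posLog_inv_le_one hx
    _ = C * (5 + log⁺ (2 * M) + log ρ) := by ring

/-- Borel's growth lemma. The supremum `M` of `(ρ - r) * σ r` over `r₀ ≤ r < ρ := r₀ + 1`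
is finite and satisfies `M ≤ C * (5 + log⁺ (2 * M) + log ρ)`, hence is `O(log ρ)`. -/
lemma le_log_of_le_nevanlinnaError {σ : ℝ → ℝ} (hσ : MonotoneOn σ (Ioi 0))
    (hσ₀ : ∀ r, 1 ≤ r → 0 ≤ σ r) {C : ℝ} (hC : 0 ≤ C)
    (h : ∀ r R, 1 ≤ r → r < R → R ≤ r + 1 → σ r ≤ C * nevanlinnaError (σ R) r R)
    {r₀ : ℝ} (hr₀ : 1 ≤ r₀) :
    σ r₀ ≤ 2 * C * (5 + log (r₀ + 1) + log (2 * (2 * C + 1))) := by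
  set ρ := r₀ + 1 with hρ
  set S : Set ℝ := (fun r ↦ (ρ - r) * σ r) '' Ico r₀ ρ
  have hbdd : BddAbove S := by
    refine ⟨σ ρ, ?_⟩
    rintro _ ⟨r, ⟨hr, hrρ⟩, rfl⟩
    calc (ρ - r) * σ r ≤ 1 * σ r := by
          gcongr
          · exact hσ₀ r (by linarith)
          · linarith
      _ = σ r := one_mul _
      _ ≤ σ ρ := hσ (mem_Ioi.2 (by linarith)) (mem_Ioi.2 (by linarith)) hrρ.le
  have hle : ∀ r, r₀ ≤ r → r < ρ → (ρ - r) * σ r ≤ sSup S := fun r hr hrρ ↦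
    le_csSup hbdd (mem_image_of_mem _ ⟨hr, hrρ⟩)
  have hσM : σ r₀ ≤ sSup S := by simpa [hρ] using hle r₀ le_rfl (by linarith)
  have hM : sSup S ≤ C * (5 + log⁺ (2 * sSup S) + log ρ) := by
    refine csSup_le (Nonempty.image _ ⟨r₀, le_rfl, by linarith⟩) ?_
    rintro _ ⟨r, ⟨hr, hrρ⟩, rfl⟩
    exact sub_mul_le_of_le_nevanlinnaError hC (by linarith) hrρ (by linarith)
      (fun R hR ↦ hσ₀ R (by linarith)) (fun R hrR hRρ ↦ h r R (by linarith) hrR (by linarith))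
      fun R hrR hRρ ↦ hle R (by linarith) hRρ
  have := le_of_le_mul_add_posLog (x := 2 * sSup S) (a := 5 + log ρ) (C := 2 * C)
    (by linarith [hσ₀ r₀ hr₀]) (by positivity) (by linarith)
  linarith

lemma isBigO_log_of_le_nevanlinnaError {σ : ℝ → ℝ} (hσ : MonotoneOn σ (Ioi 0))
    (hσ₀ : ∀ r, 1 ≤ r → 0 ≤ σ r) {C : ℝ} (hC : 0 ≤ C)
    (h : ∀ r R, 1 ≤ r → r < R → R ≤ r + 1 → σ r ≤ C * nevanlinnaError (σ R) r R) :
    σ =O[atTop] log := by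
  refine .of_bound (2 * C * (5 + 2 + log (2 * (2 * C + 1)))) ?_
  filter_upwards [eventually_ge_atTop (exp 1)] with r hr
  have hr₂ : 2 ≤ r := by linarith [exp_one_gt_d9]
  have hlog : 1 ≤ log r := (le_log_iff_exp_le (by linarith)).2 hr
  have hlog_succ : log (r + 1) ≤ 2 * log r := by
    rw [← log_rpow (by linarith), rpow_two]
    exact log_le_log (by linarith) (by nlinarith)
  have hlogC : 0 ≤ log (2 * (2 * C + 1)) := log_nonneg (by linarith)
  rw [norm_of_nonneg (hσ₀ r (by linarith)), norm_of_nonneg (by linarith)]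
  calc σ r ≤ 2 * C * (5 + log (r + 1) + log (2 * (2 * C + 1))) :=
        le_log_of_le_nevanlinnaError hσ hσ₀ hC h (by linarith)
    _ ≤ 2 * C * (5 * log r + 2 * log r + log (2 * (2 * C + 1)) * log r) := by
        gcongr
        · linarith
        · exact le_mul_of_one_le_right hlogC hlog
    _ = _ := by ring

lemma sum_mul_log_le_logCounting {E : Type*} [NormedAddCommGroup E] [ProperSpace E]
    {D : Function.locallyFinsupp E ℤ} (hD : 0 ≤ D) (s : Finset E) {ρ r : ℝ}
    (hs : ∀ a ∈ s, ‖a‖ ≤ ρ) (hρ : 1 ≤ ρ) (hr : ρ ≤ r) :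
    (∑ a ∈ s, (D a : ℝ)) * log (r / ρ) ≤ logCounting D r := by
  classical
  have hle : ∑ a ∈ s, D a • single a (1 : ℤ) ≤ D := by
    intro z
    simp only [coe_sum, coe_zsmul, Finset.sum_apply, Pi.smul_apply, single_apply, smul_eq_mul,
      mul_ite, mul_one, mul_zero, Finset.sum_ite_eq]
    split_ifs
    exacts [le_rfl, hD z]
  refine le_trans ?_ (logCounting_le hle (hρ.trans hr))
  simp only [map_sum, map_zsmul, Finset.sum_apply, zsmul_eq_mul, Finset.sum_mul]
  refine Finset.sum_le_sum fun a ha ↦ ?_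
  refine mul_le_mul_of_nonneg_left ?_ (by exact_mod_cast hD a)
  rw [logCounting_single_eq_log_sub_const ((hs a ha).trans hr),
    log_div (by linarith) (by linarith)]
  rcases eq_or_ne a 0 with rfl | ha₀
  · simpa using log_nonneg hρ
  · have := log_le_log (norm_pos_iff.2 ha₀) (hs a ha)
    rw [Int.cast_one, one_mul]
    linarith

lemma exists_logCounting_sub_zero_le_characteristic {φ : ℂ → ℂ} (hφ : Meromorphic φ) (c : ℂ) :
    ∃ c', ∀ r, logCounting (φ · - c) 0 r ≤ characteristic φ ⊤ r + c' := by
  set F : ℂ → ℂ := (φ · - c)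
  have hF : Meromorphic F := by fun_prop
  refine ⟨max |log ‖F 0‖| |log ‖meromorphicTrailingCoeffAt F 0‖| + (log⁺ ‖c‖ + log 2), fun r ↦ ?_⟩
  rw [← logCounting_inv]
  have hcount : logCounting F⁻¹ ⊤ r ≤ characteristic F⁻¹ ⊤ r :=
    le_add_of_nonneg_left (proximity_nonneg r)
  have hinv := (abs_le.1 (characteristic_sub_characteristic_inv_le (R := r) hF)).1
  have hshift := (abs_le.1 (abs_characteristic_sub_characteristic_shift_le (r := r) (a₀ := c) hφ)).1
  linarith

/-- The disc of radius `‖z₀‖ + 1 + m * ‖w‖` contains the first `m` of the given `c`-points. -/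
lemma exists_sub_le_characteristic {φ : ℂ → ℂ} (hφ : Meromorphic φ) {c z₀ w : ℂ} (hw : w ≠ 0)
    (h : ∀ m : ℕ, 1 ≤ divisor (φ · - c) univ (z₀ + m * w)) :
    ∃ c', ∀ m : ℕ, m - c' ≤ characteristic φ ⊤ (exp 1 * (‖z₀‖ + 1 + m * ‖w‖)) := by
  obtain ⟨c', hc'⟩ := exists_logCounting_sub_zero_le_characteristic hφ c
  refine ⟨c', fun m ↦ ?_⟩
  set D := (divisor (φ · - c) univ)⁺ with hD
  set ρ := ‖z₀‖ + 1 + m * ‖w‖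
  have hρ₁ : 1 ≤ ρ := by
    have : 0 ≤ m * ‖w‖ := by positivity
    linarith [norm_nonneg z₀]
  have hnorm : ∀ a ∈ (Finset.range m).image fun k : ℕ ↦ z₀ + k * w, ‖a‖ ≤ ρ := by
    simp only [Finset.forall_mem_image, Finset.mem_range]
    intro k hk
    calc ‖z₀ + k * w‖ ≤ ‖z₀‖ + k * ‖w‖ := (norm_add_le _ _).trans (by simp)
      _ ≤ ‖z₀‖ + m * ‖w‖ := by gcongr
      _ ≤ ρ := by linarith
  have hcount := sum_mul_log_le_logCounting (D := D) (posPart_nonneg _) _ hnorm hρ₁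
    (le_mul_of_one_le_left (by linarith) (one_le_exp zero_le_one))
  rw [mul_div_cancel_right₀ _ (by linarith), log_exp, mul_one,
    Finset.sum_image fun a _ b _ hab ↦ by simpa [hw] using hab, hD,
    ← logCounting_zero] at hcount
  have hm : (m : ℝ) ≤ ∑ k ∈ Finset.range m, (D (z₀ + k * w) : ℝ) := by
    calc (m : ℝ) = ∑ k ∈ Finset.range m, 1 := by simp
      _ ≤ _ := Finset.sum_le_sum fun k _ ↦ by
        exact_mod_cast (h k).trans (le_posPart (divisor (φ · - c) univ) _)
  linarith [hc' (exp 1 * ρ)]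

lemma not_isBigO_characteristic_log {φ : ℂ → ℂ} (hφ : Meromorphic φ) {c z₀ w : ℂ} (hw : w ≠ 0)
    (h : ∀ m : ℕ, 1 ≤ divisor (φ · - c) univ (z₀ + m * w)) :
    ¬ characteristic φ ⊤ =O[atTop] log := by
  intro hlog
  obtain ⟨c', hc'⟩ := exists_sub_le_characteristic hφ hw h
  set R : ℕ → ℝ := fun m ↦ exp 1 * (‖z₀‖ + 1 + m * ‖w‖)
  have hR : Tendsto R atTop atTop := by
    refine (tendsto_atTop_add_const_left _ _ ?_).const_mul_atTop (exp_pos 1)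
    exact tendsto_natCast_atTop_atTop.atTop_mul_const (norm_pos_iff.2 hw)
  have hRO : R =O[atTop] fun m : ℕ ↦ (m : ℝ) := by
    refine .of_bound (exp 1 * (‖z₀‖ + 1 + ‖w‖)) ?_
    filter_upwards [eventually_ge_atTop 1] with m hm
    have hm₁ : (1 : ℝ) ≤ m := by exact_mod_cast hm
    rw [norm_of_nonneg (by positivity), norm_of_nonneg (by positivity)]
    calc exp 1 * (‖z₀‖ + 1 + m * ‖w‖) ≤ exp 1 * ((‖z₀‖ + 1) * m + m * ‖w‖) := by
          gcongr
          exact le_mul_of_one_le_right (by positivity) hm₁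
      _ = exp 1 * (‖z₀‖ + 1 + ‖w‖) * m := by ring
  have hchar : (fun m ↦ characteristic φ ⊤ (R m)) =o[atTop] fun m : ℕ ↦ (m : ℝ) :=
    ((hlog.trans_isLittleO isLittleO_log_id_atTop).comp_tendsto hR).trans_isBigO hRO
  obtain ⟨m, hm, hcm⟩ := ((hchar.bound one_half_pos).and
    (tendsto_natCast_atTop_atTop.eventually_gt_atTop (2 * c'))).exists
  rw [RCLike.norm_natCast] at hm
  linarith [hc' m, le_norm_self (characteristic φ ⊤ (R m))]

/-! ### Wronskians -/

section Order

variable {𝕜 E : Type*} [NontriviallyNormedField 𝕜] [NormedAddCommGroup E] [NormedSpace 𝕜 E]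
  {z₀ : 𝕜}

lemma le_analyticOrderAt_sum {ι : Type*} {s : Finset ι} {f : ι → 𝕜 → E} {n : ℕ∞}
    (h : ∀ i ∈ s, n ≤ analyticOrderAt (f i) z₀) : n ≤ analyticOrderAt (∑ i ∈ s, f i) z₀ := by
  induction s using Finset.cons_induction with
  | empty => exact le_top.trans_eq (analyticOrderAt_eq_top.2 (by simp)).symm
  | cons a s has ih =>
    rw [Finset.sum_cons]
    exact (le_min (h a (Finset.mem_cons_self a s))
      (ih fun i hi ↦ h i (Finset.mem_cons_of_mem hi))).trans le_analyticOrderAt_add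

lemma analyticOrderAt_prod {ι : Type*} {s : Finset ι} {f : ι → 𝕜 → 𝕜}
    (hf : ∀ i ∈ s, AnalyticAt 𝕜 (f i) z₀) :
    analyticOrderAt (∏ i ∈ s, f i) z₀ = ∑ i ∈ s, analyticOrderAt (f i) z₀ := by
  induction s using Finset.cons_induction with
  | empty => simp [analyticOrderAt_eq_zero]
  | cons a s has ih =>
    rw [Finset.forall_mem_cons] at hf
    rw [Finset.prod_cons, Finset.sum_cons, analyticOrderAt_mul hf.1 (s.analyticAt_prod hf.2),
      ih hf.2]

lemma analyticOrderAt_le_analyticOrderAt_deriv_add_one [CharZero 𝕜] [CompleteSpace E] {f : 𝕜 → E}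
    (hf : AnalyticAt 𝕜 f z₀) : analyticOrderAt f z₀ ≤ analyticOrderAt (deriv f) z₀ + 1 := by
  rcases eq_or_ne (f z₀) 0 with hz₀ | hz₀
  · simpa [hz₀] using hf.analyticOrderAt_deriv_add_one.ge
  · simp [analyticOrderAt_eq_zero.2 (.inr hz₀)]

lemma sub_le_analyticOrderAt_iteratedDeriv [CharZero 𝕜] [CompleteSpace E] {f : 𝕜 → E}
    (hf : AnalyticAt 𝕜 f z₀) (i : ℕ) :
    analyticOrderAt f z₀ - i ≤ analyticOrderAt (iteratedDeriv i f) z₀ := by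
  rw [iteratedDeriv_eq_iterate]
  induction i with
  | zero => simp
  | succ i ih =>
    rw [Function.iterate_succ_apply']
    refine tsub_le_iff_right.2 ((tsub_le_iff_right.1 ih).trans ?_)
    rw [Nat.cast_succ, add_comm (i : ℕ∞), ← add_assoc]
    gcongr
    exact analyticOrderAt_le_analyticOrderAt_deriv_add_one (hf.iterated_deriv i)

variable {n : ℕ} {A : Fin n → Fin n → 𝕜 → 𝕜}

lemma analyticAt_det (hA : ∀ i j, AnalyticAt 𝕜 (A i j) z₀) :
    AnalyticAt 𝕜 (fun z ↦ (Matrix.of fun i j ↦ A i j z).det) z₀ := by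
  simp only [Matrix.det_apply, Units.smul_def, zsmul_eq_mul, Matrix.of_apply]
  fun_prop

lemma sum_le_analyticOrderAt_det (hA : ∀ i j, AnalyticAt 𝕜 (A i j) z₀) {e : Fin n → ℕ∞}
    (he : ∀ i j, e i ≤ analyticOrderAt (A i j) z₀) :
    ∑ i, e i ≤ analyticOrderAt (fun z ↦ (Matrix.of fun i j ↦ A i j z).det) z₀ := by
  have hdet : (fun z ↦ (Matrix.of fun i j ↦ A i j z).det) =
      ∑ σ : Equiv.Perm (Fin n), (fun _ ↦ ((Equiv.Perm.sign σ : ℤ) : 𝕜)) * ∏ i, A i (σ i) := by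
    ext z
    rw [← Matrix.det_transpose]
    simp [Matrix.det_apply, Units.smul_def]
  rw [hdet]
  refine le_analyticOrderAt_sum fun σ _ ↦ ?_
  rw [analyticOrderAt_mul analyticAt_const (Finset.univ.analyticAt_prod fun i _ ↦ hA _ _),
    analyticOrderAt_prod fun i _ ↦ hA _ _]
  exact le_add_left (Finset.sum_le_sum fun i _ ↦ he _ _)

end Order

/-- The Wronskian determinant of `n` functions of one variable. -/
noncomputable def wronskian {𝕜 : Type*} [NontriviallyNormedField 𝕜] {n : ℕ}
    (f : Fin n → 𝕜 → 𝕜) (z : 𝕜) : 𝕜 :=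
  (Matrix.of fun k i : Fin n ↦ iteratedDeriv i (f k) z).det

section Wronskian

variable {𝕜 : Type*} [NontriviallyNormedField 𝕜] {n : ℕ} {f g : Fin n → 𝕜 → 𝕜} {z : 𝕜}

lemma wronskian_congr (h : ∀ k, f k =ᶠ[𝓝 z] g k) : wronskian f z = wronskian g z := by
  unfold wronskian
  congr 1
  ext k i
  exact (h k).iteratedDeriv_eq i

lemma wronskian_cons_one (f : Fin n → 𝕜 → 𝕜) (z : 𝕜) :
    wronskian (Fin.cons 1 f : Fin (n + 1) → 𝕜 → 𝕜) z = wronskian (fun k ↦ deriv (f k)) z := by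
  unfold wronskian
  rw [Matrix.det_succ_row_zero, Fin.sum_univ_succ, Finset.sum_eq_zero]
  · simp only [Matrix.of_apply, Fin.cons_zero, Fin.val_zero, iteratedDeriv_zero, pow_zero, one_mul,
      Pi.one_apply, add_zero]
    congr 1
    ext k i
    simp [iteratedDeriv_succ']
  · intro i _
    simp [Pi.one_def, iteratedDeriv_const]

variable [CompleteSpace 𝕜]

lemma analyticAt_wronskian (hf : ∀ k, AnalyticAt 𝕜 (f k) z) : AnalyticAt 𝕜 (wronskian f) z :=
  analyticAt_det fun k i ↦ by
    rw [iteratedDeriv_eq_iterate]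
    exact (hf k).iterated_deriv i

/-- By the Leibniz rule, multiplication by `h` acts on the Wronskian matrix as right multiplication
by an upper triangular matrix with diagonal entries `h z`. -/
lemma wronskian_mul_left {h : 𝕜 → 𝕜} (hh : AnalyticAt 𝕜 h z) (hf : ∀ k, AnalyticAt 𝕜 (f k) z) :
    wronskian (fun k ↦ h * f k) z = h z ^ n * wronskian f z := by
  set T : Matrix (Fin n) (Fin n) 𝕜 := Matrix.of fun j i ↦
    if j ≤ i then ((i : ℕ).choose j : 𝕜) * iteratedDeriv (i - j : ℕ) h z else 0 with hT
  have hT_det : T.det = h z ^ n := by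
    rw [Matrix.det_of_isUpperTriangular]
    · simp [hT]
    · intro i j hij
      have hji : ¬ i ≤ j := not_le.2 hij
      simp [hT, hji]
  have hleibniz : (Matrix.of fun k i : Fin n ↦ iteratedDeriv i (h * f k) z) =
      (Matrix.of fun k i : Fin n ↦ iteratedDeriv i (f k) z) * T := by
    ext k i
    have hi : (i : ℕ) + 1 ≤ n := i.2
    rw [Matrix.of_apply, mul_comm h, iteratedDeriv_mul (hf k).contDiffAt hh.contDiffAt,
      Matrix.mul_apply, Finset.sum_range]
    refine Finset.sum_of_injOn (Fin.castLE hi) (Fin.castLE_injective hi).injOn (by simp) ?_ ?_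
    · intro j _ hj
      have hij : ¬ j ≤ i := fun hji ↦ hj ⟨⟨j, Nat.lt_succ_iff.2 hji⟩, by simp, rfl⟩
      simp [hT, hij]
    · intro j _
      have hji : Fin.castLE hi j ≤ i := Nat.lt_succ_iff.1 j.2
      simp only [hT, Matrix.of_apply, if_pos hji, Fin.val_castLE]
      ring
  rw [wronskian, hleibniz, Matrix.det_mul, hT_det, mul_comm, wronskian]

lemma wronskian_eq_pow_mul_wronskian_deriv_div {f : Fin (n + 1) → 𝕜 → 𝕜}
    (hf : ∀ k, AnalyticAt 𝕜 (f k) z) (hz : f 0 z ≠ 0) :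
    wronskian f z = f 0 z ^ (n + 1) * wronskian (fun k : Fin n ↦ deriv (f k.succ / f 0)) z := by
  have hu : ∀ k : Fin n, AnalyticAt 𝕜 (f k.succ / f 0) z := fun k ↦ (hf _).div (hf 0) hz
  rw [← wronskian_cons_one, ← wronskian_mul_left (hf 0)
    (Fin.cases analyticAt_const fun k ↦ by simpa using hu k)]
  refine wronskian_congr (Fin.cases ?_ fun k ↦ ?_)
  · simp
  · filter_upwards [(hf 0).continuousAt.eventually_ne hz] with y hy
    simp [mul_div_cancel₀ _ hy]

lemma wronskian_removeNth {F : Fin (n + 1) → 𝕜 → 𝕜} (hF : ∀ k, AnalyticAt 𝕜 (F k) z)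
    (hsum : ∑ k, F k = 0) (p q : Fin (n + 1)) :
    wronskian (q.removeNth F) z = ((q : ℤ) - p).negOnePow • wronskian (p.removeNth F) z := by
  refine Matrix.submatrix_succAbove_det_eq_negOnePow_submatrix_succAbove_det
    (Matrix.of fun k (i : Fin n) ↦ iteratedDeriv i (F k) z) ?_ q p
  ext i
  refine (Finset.sum_apply _ _ _).trans ?_
  have := iteratedDeriv_sum (n := i) (I := Finset.univ) (f := F) fun k _ ↦ (hF k).contDiffAt
  rw [hsum] at this
  simpa using this.symm

lemma le_analyticOrderAt_wronskian [CharZero 𝕜] {m : ℕ} (hf : ∀ k, AnalyticAt 𝕜 (f k) z)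
    (hm : ∀ k, m ≤ analyticOrderAt (f k) z) :
    n * m + ∑ k, (analyticOrderAt (f k) z - m - (n - 1 : ℕ)) ≤
      analyticOrderAt (wronskian f) z := by
  choose u hu hfu using fun k ↦ (natCast_le_analyticOrderAt (hf k)).1 (hm k)
  set h : 𝕜 → 𝕜 := fun y ↦ (y - z) ^ m
  have hh : AnalyticAt 𝕜 h z := by fun_prop
  have hh_order : analyticOrderAt h z = m := analyticOrderAt_centeredMonomial
  have hW : wronskian f =ᶠ[𝓝 z] h ^ n * wronskian u := by
    filter_upwards [eventually_all.2 fun k ↦ (hfu k).eventually_nhds,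
      eventually_all.2 fun k ↦ (hu k).eventually_analyticAt] with y hfy huy
    rw [wronskian_congr (g := fun k ↦ h * u k) hfy, wronskian_mul_left (by fun_prop) huy]
    rfl
  have hu_order : ∀ k, analyticOrderAt (f k) z - m = analyticOrderAt (u k) z := by
    intro k
    rw [analyticOrderAt_congr (g := h * u k) (hfu k), analyticOrderAt_mul hh (hu k), hh_order]
    exact (ENat.addLECancellable_natCast m).add_tsub_cancel_left
  rw [analyticOrderAt_congr hW, analyticOrderAt_mul (hh.pow n) (analyticAt_wronskian hu),
    analyticOrderAt_pow hh, hh_order, nsmul_eq_mul]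
  simp only [hu_order]
  gcongr
  refine sum_le_analyticOrderAt_det (fun k i ↦ ?_) fun k i ↦ ?_
  · rw [iteratedDeriv_eq_iterate]
    exact (hu k).iterated_deriv i
  · refine (tsub_le_tsub_left ?_ _).trans (sub_le_analyticOrderAt_iteratedDeriv (hu k) i)
    exact_mod_cast Nat.le_sub_one_of_lt i.2

end Wronskian

section LinearIndependence

variable {𝕜 : Type*} [RCLike 𝕜] {n : ℕ} {U : Set 𝕜}

lemma exists_eqOn_const_of_deriv_eq_zero {S : 𝕜 → 𝕜} (hU : IsOpen U) (hne : U.Nonempty)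
    (hS : DifferentiableOn 𝕜 S U) (hS' : EqOn (deriv S) 0 U) :
    ∃ c, ∃ V ⊆ U, IsOpen V ∧ V.Nonempty ∧ EqOn S (fun _ ↦ c) V := by
  obtain ⟨y, hy⟩ := hne
  obtain ⟨ε, hε, hball⟩ := Metric.isOpen_iff.1 hU y hy
  exact ⟨S y, ball y ε, hball, isOpen_ball, ⟨y, mem_ball_self hε⟩, fun z hz ↦
    isOpen_ball.is_const_of_deriv_eq_zero (convex_ball y ε).isPreconnected (hS.mono hball)
      (hS'.mono hball) hz (mem_ball_self hε)⟩

lemma exists_sum_smul_eqOn_zero_of_wronskian_eqOn_zero {f : Fin n → 𝕜 → 𝕜}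
    (hU : IsOpen U) (hne : U.Nonempty) (hf : ∀ k, AnalyticOnNhd 𝕜 (f k) U)
    (hW : EqOn (wronskian f) 0 U) :
    ∃ c : Fin n → 𝕜, c ≠ 0 ∧ ∃ V ⊆ U, IsOpen V ∧ V.Nonempty ∧ EqOn (∑ k, c k • f k) 0 V := by
  induction n generalizing U with
  | zero =>
    obtain ⟨z, hz⟩ := hne
    simpa [wronskian] using hW hz
  | succ n ih =>
    by_cases hf₀ : EqOn (f 0) 0 U
    · exact ⟨Pi.single 0 1, by simp, U, le_rfl, hU, hne, by simpa [Pi.single_apply] using hf₀⟩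
    obtain ⟨z₀, hz₀, hfz₀⟩ : ∃ z ∈ U, f 0 z ≠ 0 := by simpa [EqOn] using hf₀
    have hU' : IsOpen (U ∩ f 0 ⁻¹' {0}ᶜ) :=
      (hf 0).continuousOn.isOpen_inter_preimage hU isOpen_compl_singleton
    set u : Fin n → 𝕜 → 𝕜 := fun k ↦ f k.succ / f 0 with hu
    have hua : ∀ k, AnalyticOnNhd 𝕜 (u k) (U ∩ f 0 ⁻¹' {0}ᶜ) := fun k z hz ↦
      (hf _ z hz.1).div (hf 0 z hz.1) hz.2
    have hWu : EqOn (wronskian fun k ↦ deriv (u k)) 0 (U ∩ f 0 ⁻¹' {0}ᶜ) := by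
      intro z hz
      have := wronskian_eq_pow_mul_wronskian_deriv_div (fun k ↦ hf k z hz.1) hz.2
      rw [hW hz.1] at this
      exact (mul_eq_zero.1 this.symm).resolve_left (pow_ne_zero _ hz.2)
    obtain ⟨c, hc, V, hVU, hVo, hV, hcV⟩ :=
      ih hU' ⟨z₀, hz₀, hfz₀⟩ (fun k ↦ (hua k).deriv) hWu
    have hud : ∀ k, ∀ z ∈ V, DifferentiableAt 𝕜 (c k • u k) z := fun k z hz ↦
      (hua k z (hVU hz)).differentiableAt.const_smul _
    obtain ⟨c₀, V', hVV', hVo', hV', hcV'⟩ :=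
      exists_eqOn_const_of_deriv_eq_zero (S := ∑ k, c k • u k) hVo hV
        (fun z hz ↦ (DifferentiableAt.sum fun k _ ↦ hud k z hz).differentiableWithinAt)
        fun z hz ↦ by
          rw [deriv_sum fun k _ ↦ hud k z hz, ← hcV hz]
          simp [deriv_const_smul_field]
    refine ⟨Fin.cons (-c₀) c, fun h ↦ hc ?_, V', fun z hz ↦ (hVU (hVV' hz)).1, hVo', hV',
      fun z hz ↦ ?_⟩
    · ext k
      simpa using congrFun h k.succ
    · have hfz : f 0 z ≠ 0 := (hVU (hVV' hz)).2
      have hz := hcV' hz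
      simp only [Finset.sum_apply, Pi.smul_apply, smul_eq_mul, hu, Pi.div_apply] at hz
      simp only [Fin.sum_univ_succ, Fin.cons_zero, Fin.cons_succ, Finset.sum_apply,
        Pi.smul_apply, smul_eq_mul, ← hz, Pi.zero_apply, neg_mul, Finset.sum_mul]
      rw [neg_add_eq_zero]
      refine Finset.sum_congr rfl fun k _ ↦ ?_
      field_simp

end LinearIndependence

lemma wronskian_ne_zero_of_linearIndependent {n : ℕ} {f : Fin n → ℂ → ℂ}
    (hf : ∀ k, Differentiable ℂ (f k)) (h : LinearIndependent ℂ f) : wronskian f ≠ 0 := by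
  intro hW
  obtain ⟨c, hc, V, -, hVo, ⟨y, hy⟩, hcV⟩ := exists_sum_smul_eqOn_zero_of_wronskian_eqOn_zero
    isOpen_univ univ_nonempty (fun k z _ ↦ (hf k).analyticAt z) (by simp [hW])
  have hsum : ∑ k, c k • f k = 0 :=
    AnalyticOnNhd.eq_of_eventuallyEq (z₀ := y)
      (fun z _ ↦ Finset.univ.analyticAt_sum fun k _ ↦ (((hf k).const_smul (c k)).analyticAt z))
      (fun z _ ↦ analyticAt_const) (hcV.eventuallyEq_of_mem (hVo.mem_nhds hy))
  exact hc (funext (Fintype.linearIndependent_iff.1 h c hsum))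

/-! ### Cartan's second main theorem -/

lemma divisor_univ_of_analyticAt {E : Type*} [NormedAddCommGroup E] [NormedSpace ℂ E]
    {f : ℂ → E} (hf : Meromorphic f) {z : ℂ} (hz : AnalyticAt ℂ f z) :
    divisor f univ z = analyticOrderNatAt f z := by
  rw [divisor_apply hf.meromorphicOn (mem_univ z), hz.meromorphicOrderAt_eq, analyticOrderNatAt]
  cases analyticOrderAt f z <;> simp

section Entire

variable {E : Type*} [NormedAddCommGroup E] [NormedSpace ℂ E] [CompleteSpace E] {f : ℂ → E}

lemma meromorphic_of_differentiable (hf : Differentiable ℂ f) : Meromorphic f :=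
  fun z ↦ (hf.analyticAt z).meromorphicAt

lemma analyticOrderAt_ne_top_of_differentiable (hf : Differentiable ℂ f) (hf₀ : f ≠ 0) (z : ℂ) :
    analyticOrderAt f z ≠ ⊤ := by
  rwa [Ne, AnalyticOnNhd.analyticOrderAt_eq_top_iff_eq_zero z hf.analyticAt]

lemma meromorphicOrderAt_ne_top_of_differentiable (hf : Differentiable ℂ f) (hf₀ : f ≠ 0) (z : ℂ) :
    meromorphicOrderAt f z ≠ ⊤ := by
  simpa [(hf.analyticAt z).meromorphicOrderAt_eq] using
    analyticOrderAt_ne_top_of_differentiable hf hf₀ z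

lemma divisor_univ_of_differentiable (hf : Differentiable ℂ f) (z : ℂ) :
    divisor f univ z = analyticOrderNatAt f z :=
  divisor_univ_of_analyticAt (meromorphic_of_differentiable hf) (hf.analyticAt z)

lemma finite_zeros_inter_closedBall (hf : Differentiable ℂ f) (hf₀ : f ≠ 0) (ρ : ℝ) :
    ({z | f z = 0} ∩ closedBall 0 ρ).Finite := by
  obtain ⟨x, hx⟩ := Function.ne_iff.1 hf₀
  have hcodiscrete := codiscreteWithin_mono (subset_univ (closedBall (0 : ℂ) ρ))
    (AnalyticOnNhd.preimage_zero_mem_codiscrete (fun z _ ↦ hf.analyticAt z) hx)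
  exact ((isCompact_closedBall 0 ρ).finite_sdiff_of_mem_codiscreteWithin hcodiscrete).subset
    fun z hz ↦ ⟨hz.2, fun h ↦ h hz.1⟩

end Entire

lemma analyticOrderAt_swap_le {ι : Type*} [Fintype ι] {F : ι → ℂ → ℂ} {z : ℂ}
    (hF : ∀ k, AnalyticAt ℂ (F k) z) (k : ι) :
    analyticOrderAt (Function.swap F) z ≤ analyticOrderAt (F k) z := by
  refine ENat.forall_natCast_le_iff_le.1 fun m hm ↦ ?_
  obtain ⟨g, hg, heq⟩ := (natCast_le_analyticOrderAt (analyticAt_pi_iff.2 hF)).1 hm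
  refine (natCast_le_analyticOrderAt (hF k)).2 ⟨fun z ↦ g z k, analyticAt_pi_iff.1 hg k, ?_⟩
  filter_upwards [heq] with w hw using congrFun hw k

lemma exists_analyticOrderAt_eq_analyticOrderAt_swap {ι : Type*} [Fintype ι] [Nonempty ι]
    {F : ι → ℂ → ℂ} {z : ℂ} (hF : ∀ k, AnalyticAt ℂ (F k) z) :
    ∃ p, analyticOrderAt (F p) z = analyticOrderAt (Function.swap F) z := by
  obtain ⟨p, hp⟩ := Finite.exists_min fun k ↦ analyticOrderAt (F k) z
  refine ⟨p, le_antisymm (ENat.forall_natCast_le_iff_le.1 fun m hm ↦ ?_)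
    (analyticOrderAt_swap_le hF p)⟩
  choose g hg heq using fun k ↦ (natCast_le_analyticOrderAt (hF k)).1 (hm.trans (hp k))
  refine (natCast_le_analyticOrderAt (analyticAt_pi_iff.2 hF)).2
    ⟨Function.swap g, analyticAt_pi_iff.2 hg, ?_⟩
  filter_upwards [eventually_all.2 heq] with w hw using funext hw

lemma differentiable_swap {ι : Type*} {F : ι → ℂ → ℂ} (hF : ∀ k, Differentiable ℂ (F k)) :
    Differentiable ℂ (Function.swap F) :=
  differentiable_pi.2 hF

section Curve

variable {ι : Type*} [Fintype ι] {F : ι → ℂ → ℂ}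

lemma divisor_swap_le (hF : ∀ k, Differentiable ℂ (F k)) {k : ι} (hk : F k ≠ 0) :
    divisor (Function.swap F) univ ≤ divisor (F k) univ := by
  intro z
  rw [divisor_univ_of_differentiable (differentiable_swap hF),
    divisor_univ_of_differentiable (hF k)]
  exact Nat.cast_le.2 <| ENat.toNat_le_toNat
    (analyticOrderAt_swap_le (fun k ↦ (hF k).analyticAt z) k)
    (analyticOrderAt_ne_top_of_differentiable (hF k) hk z)

lemma exists_divisor_eq_divisor_swap [Nonempty ι] (hF : ∀ k, Differentiable ℂ (F k)) (z : ℂ) :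
    ∃ p, divisor (F p) univ z = divisor (Function.swap F) univ z := by
  obtain ⟨p, hp⟩ := exists_analyticOrderAt_eq_analyticOrderAt_swap fun k ↦ (hF k).analyticAt z
  refine ⟨p, ?_⟩
  rw [divisor_univ_of_differentiable (hF p),
    divisor_univ_of_differentiable (differentiable_swap hF), analyticOrderNatAt,
    analyticOrderNatAt, hp]

end Curve

lemma differentiable_wronskian {n : ℕ} {f : Fin n → ℂ → ℂ} (hf : ∀ k, Differentiable ℂ (f k)) :
    Differentiable ℂ (wronskian f) :=
  fun z ↦ (analyticAt_wronskian fun k ↦ (hf k).analyticAt z).differentiableAt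

lemma add_sum_max_le_divisor_wronskian {n m : ℕ} {f : Fin n → ℂ → ℂ}
    (hf : ∀ k, Differentiable ℂ (f k)) (hf₀ : ∀ k, f k ≠ 0) (hW : wronskian f ≠ 0) {z : ℂ}
    (hm : ∀ k, m ≤ divisor (f k) univ z) :
    n * m + ∑ k, max (divisor (f k) univ z - m - (n - 1 : ℕ)) 0 ≤
      divisor (wronskian f) univ z := by
  have hord : ∀ k, analyticOrderAt (f k) z = analyticOrderNatAt (f k) z := fun k ↦
    (Nat.cast_analyticOrderNatAt (analyticOrderAt_ne_top_of_differentiable (hf k) (hf₀ k) z)).symm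
  simp only [divisor_univ_of_differentiable (hf _), Nat.cast_le] at hm ⊢
  rw [divisor_univ_of_differentiable (differentiable_wronskian hf)]
  have h := le_analyticOrderAt_wronskian (fun k ↦ (hf k).analyticAt z) fun k ↦ by
    rw [hord k]
    exact_mod_cast hm k
  simp only [hord, ← Nat.cast_analyticOrderNatAt
    (analyticOrderAt_ne_top_of_differentiable (differentiable_wronskian hf) hW z)] at h
  norm_cast at h
  zify at h
  convert h using 4
  omega

lemma wronskian_removeNth_eq_or_eq_neg {n : ℕ} {F : Fin (n + 1) → ℂ → ℂ}
    (hF : ∀ k, Differentiable ℂ (F k)) (hsum : ∑ k, F k = 0) (p q : Fin (n + 1)) :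
    wronskian (q.removeNth F) = wronskian (p.removeNth F) ∨
      wronskian (q.removeNth F) = -wronskian (p.removeNth F) := by
  have h : wronskian (q.removeNth F) = ((q : ℤ) - p).negOnePow • wronskian (p.removeNth F) :=
    funext fun z ↦ wronskian_removeNth (fun k ↦ (hF k).analyticAt z) hsum p q
  rcases Int.units_eq_one_or ((q : ℤ) - p).negOnePow with hu | hu <;> simp [h, hu]

/-- Cartan's local estimate, with truncation to level `n - 1`. At `z` the Wronskian may be computed
from the coordinates other than one of minimal order. -/
lemma sum_divisor_le_divisor_wronskian_add {n : ℕ} {F : Fin (n + 1) → ℂ → ℂ}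
    (hF : ∀ k, Differentiable ℂ (F k)) (hF₀ : ∀ k, F k ≠ 0) (hsum : ∑ k, F k = 0)
    {q : Fin (n + 1)} (hW : wronskian (q.removeNth F) ≠ 0) (z : ℂ) :
    ∑ k, divisor (F k) univ z ≤
      divisor (wronskian (q.removeNth F)) univ z + divisor (Function.swap F) univ z +
        ∑ k, min (divisor (F k) univ z - divisor (Function.swap F) univ z) (n - 1 : ℕ) := by
  obtain ⟨p, hp⟩ := exists_divisor_eq_divisor_swap hF z
  obtain ⟨m, hm⟩ : ∃ m : ℕ, divisor (Function.swap F) univ z = m :=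
    ⟨_, divisor_univ_of_differentiable (differentiable_swap hF) z⟩
  have hle : ∀ k, m ≤ divisor (F k) univ z := fun k ↦ by
    rw [← hm]
    exact divisor_swap_le hF (hF₀ k) z
  have hWd : ∀ p : Fin (n + 1), Differentiable ℂ (wronskian (p.removeNth F)) := fun p ↦
    differentiable_wronskian fun k ↦ hF (p.succAbove k)
  have hWp : wronskian (p.removeNth F) ≠ 0 ∧ divisor (wronskian (q.removeNth F)) univ z =
      divisor (wronskian (p.removeNth F)) univ z := by
    rw [divisor_univ_of_differentiable (hWd q), divisor_univ_of_differentiable (hWd p),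
      analyticOrderNatAt, analyticOrderNatAt]
    rcases wronskian_removeNth_eq_or_eq_neg hF hsum p q with h | h <;> simp_all
  have hlocal : n * m + ∑ k, max (divisor (p.removeNth F k) univ z - m - (n - 1 : ℕ)) 0 ≤
      divisor (wronskian (p.removeNth F)) univ z :=
    add_sum_max_le_divisor_wronskian (fun k ↦ hF _) (fun k ↦ hF₀ _) hWp.1 fun k ↦ hle _
  have hmax : ∀ k, divisor (F k) univ z = m +
      max (divisor (F k) univ z - m - (n - 1 : ℕ)) 0 +
        min (divisor (F k) univ z - m) (n - 1 : ℕ) := fun k ↦ by omega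
  have hp₀ : max (divisor (F p) univ z - m - (n - 1 : ℕ)) 0 = 0 := by omega
  rw [Finset.sum_congr rfl fun k _ ↦ hmax k, Finset.sum_add_distrib, Finset.sum_add_distrib, hm,
    hWp.2, p.sum_univ_succAbove fun k ↦ max (divisor (F k) univ z - m - (n - 1 : ℕ)) 0, hp₀]
  simp only [Fin.removeNth_apply] at hlocal
  simp only [Finset.sum_const, Finset.card_univ, Fintype.card_fin, nsmul_eq_mul]
  push_cast
  linarith

lemma exists_circleAverage_log_norm_eq {f : ℂ → ℂ} (hf : Differentiable ℂ f) :
    ∃ c, ∀ r, 1 ≤ r → circleAverage (log ‖f ·‖) 0 r = logCounting (divisor f univ) r + c := by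
  refine ⟨log ‖meromorphicTrailingCoeffAt f 0‖, fun r hr ↦ ?_⟩
  rw [logCounting_divisor_eq_circleAverage_sub_const (meromorphic_of_differentiable hf)
    (by linarith), sub_add_cancel]

lemma circleIntegrable_log_norm_of_differentiable {E : Type*} [NormedAddCommGroup E]
    [NormedSpace ℂ E] [CompleteSpace E] {f : ℂ → E} (hf : Differentiable ℂ f) (r : ℝ) :
    CircleIntegrable (log ‖f ·‖) 0 r :=
  circleIntegrable_log_norm fun z _ ↦ meromorphic_of_differentiable hf z

/-- The order function of the holomorphic curve with homogeneous coordinates `F`. The coordinates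
may have common zeros, which are discounted. -/
noncomputable def curveOrder {ι : Type*} [Fintype ι] (F : ι → ℂ → ℂ) (r : ℝ) : ℝ :=
  circleAverage (fun z ↦ log ‖Function.swap F z‖) 0 r -
    logCounting (divisor (Function.swap F) univ) r

section CurveOrder

variable {ι : Type*} [Fintype ι] {F : ι → ℂ → ℂ}

lemma norm_apply_le_norm_swap (k : ι) (z : ℂ) : ‖F k z‖ ≤ ‖Function.swap F z‖ :=
  norm_le_pi_norm (Function.swap F z) k

lemma exists_logCounting_sub_le_curveOrder (hF : ∀ k, Differentiable ℂ (F k)) (k : ι) :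
    ∃ c, ∀ r, 1 ≤ r → (∀ z ∈ sphere (0 : ℂ) r, F k z ≠ 0) →
      logCounting (divisor (F k) univ - divisor (Function.swap F) univ) r ≤ curveOrder F r + c := by
  obtain ⟨c, hc⟩ := exists_circleAverage_log_norm_eq (hF k)
  refine ⟨-c, fun r hr hk ↦ ?_⟩
  have hmono : circleAverage (fun z ↦ log ‖F k z‖) 0 r ≤
      circleAverage (fun z ↦ log ‖Function.swap F z‖) 0 r := by
    refine circleAverage_mono (circleIntegrable_log_norm_of_differentiable (hF k) r)
      (circleIntegrable_log_norm_of_differentiable (differentiable_swap hF) r) fun z hz ↦ ?_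
    rw [abs_of_pos (by linarith)] at hz
    exact log_le_log (norm_pos_iff.2 (hk z hz)) (norm_apply_le_norm_swap k z)
  rw [map_sub, Pi.sub_apply, curveOrder]
  linarith [hc r hr]

lemma divisor_div_of_differentiable {f g : ℂ → ℂ} (hf : Differentiable ℂ f)
    (hg : Differentiable ℂ g) (hf₀ : f ≠ 0) (hg₀ : g ≠ 0) :
    divisor (f / g) univ = divisor f univ - divisor g univ := by
  have hf' := meromorphic_of_differentiable hf
  have hg' := meromorphic_of_differentiable hg
  rw [div_eq_mul_inv, divisor_mul hf'.meromorphicOn hg'.inv.meromorphicOn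
    (fun z _ ↦ meromorphicOrderAt_ne_top_of_differentiable hf hf₀ z) fun z _ ↦ ?_,
    divisor_inv, sub_eq_add_neg]
  simpa [meromorphicOrderAt_inv] using meromorphicOrderAt_ne_top_of_differentiable hg hg₀ z

lemma divisor_pow_of_differentiable {f : ℂ → ℂ} (hf : Differentiable ℂ f) (d : ℕ) :
    divisor (f ^ d) univ = d • divisor f univ :=
  mod_cast divisor_pow (meromorphic_of_differentiable hf).meromorphicOn d

lemma logCounting_div_top_le (hF : ∀ k, Differentiable ℂ (F k)) {k q : ι} (hk : F k ≠ 0)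
    (hq : F q ≠ 0) {r : ℝ} (hr : 1 ≤ r) :
    logCounting (F k / F q) ⊤ r ≤
      logCounting (divisor (F q) univ) r - logCounting (divisor (Function.swap F) univ) r := by
  have hpole : (divisor (F k / F q) univ)⁻ ≤
      divisor (F q) univ - divisor (Function.swap F) univ := by
    rw [divisor_div_of_differentiable (hF k) (hF q) hk hq]
    refine sup_le ?_ (sub_nonneg.2 (divisor_swap_le hF hq))
    rw [neg_sub]
    exact sub_le_sub_left (divisor_swap_le hF hk) _
  simpa [logCounting_top] using logCounting_le hpole hr

lemma proximity_div_top_le (hF : ∀ k, Differentiable ℂ (F k)) (k : ι) {q : ι} {r : ℝ}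
    (hr : 0 ≤ r) (hq : ∀ z ∈ sphere (0 : ℂ) r, F q z ≠ 0) :
    proximity (F k / F q) ⊤ r ≤ circleAverage (fun z ↦ log ‖Function.swap F z‖) 0 r -
      circleAverage (fun z ↦ log ‖F q z‖) 0 r := by
  have hswap := circleIntegrable_log_norm_of_differentiable (differentiable_swap hF) r
  have hFq := circleIntegrable_log_norm_of_differentiable (hF q) r
  rw [proximity_top, ← circleAverage_fun_sub hswap hFq]
  refine circleAverage_mono (circleIntegrable_posLog_norm fun z _ ↦
    (meromorphic_of_differentiable (hF k) z).div (meromorphic_of_differentiable (hF q) z))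
    (hswap.sub hFq) fun z hz ↦ ?_
  rw [abs_of_nonneg hr] at hz
  have hq₀ := norm_pos_iff.2 (hq z hz)
  have hone : 1 ≤ ‖Function.swap F z‖ / ‖F q z‖ :=
    (one_le_div hq₀).2 (norm_apply_le_norm_swap q z)
  rw [← log_div (hq₀.trans_le (norm_apply_le_norm_swap q z)).ne' hq₀.ne',
    ← posLog_eq_log (hone.trans (le_abs_self _)), Pi.div_apply, norm_div]
  exact posLog_le_posLog (by positivity)
    (div_le_div_of_nonneg_right (norm_apply_le_norm_swap k z) hq₀.le)

lemma exists_characteristic_div_le_curveOrder (hF : ∀ k, Differentiable ℂ (F k)) {k q : ι}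
    (hk : F k ≠ 0) (hq : F q ≠ 0) :
    ∃ c, ∀ r, 1 ≤ r → (∀ z ∈ sphere (0 : ℂ) r, F q z ≠ 0) →
      characteristic (F k / F q) ⊤ r ≤ curveOrder F r + c := by
  obtain ⟨c, hc⟩ := exists_circleAverage_log_norm_eq (hF q)
  refine ⟨-c, fun r hr hqr ↦ ?_⟩
  have hcount := logCounting_div_top_le hF hk hq hr
  have hprox := proximity_div_top_le hF k (by linarith) hqr
  simp only [characteristic, curveOrder, Pi.add_apply]
  linarith [hc r hr]

lemma norm_swap_pow [Nonempty ι] (d : ℕ) (z : ℂ) :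
    ‖Function.swap (F ^ d) z‖ = ‖Function.swap F z‖ ^ d := by
  refine le_antisymm ((pi_norm_le_iff_of_nonempty _).2 fun k ↦ ?_) ?_
  · simpa [Function.swap] using pow_le_pow_left₀ (norm_nonneg _) (norm_apply_le_norm_swap k z) d
  · obtain ⟨k, hk⟩ := Finite.exists_max fun k ↦ ‖F k z‖
    refine (pow_le_pow_left₀ (norm_nonneg _) ((pi_norm_le_iff_of_nonempty _).2 hk) d).trans ?_
    simpa using norm_apply_le_norm_swap (F := F ^ d) k z

lemma divisor_swap_pow [Nonempty ι] (hF : ∀ k, Differentiable ℂ (F k)) (hF₀ : ∀ k, F k ≠ 0)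
    (d : ℕ) : divisor (Function.swap (F ^ d)) univ = d • divisor (Function.swap F) univ := by
  have hpow : ∀ k, divisor ((F ^ d) k) univ = d • divisor (F k) univ := fun k ↦
    divisor_pow_of_differentiable (hF k) d
  have hFd : ∀ k, Differentiable ℂ ((F ^ d) k) := fun k ↦ (hF k).pow d
  ext z
  obtain ⟨p, hp⟩ := exists_divisor_eq_divisor_swap hF z
  obtain ⟨p', hp'⟩ := exists_divisor_eq_divisor_swap hFd z
  refine le_antisymm ((divisor_swap_le hFd (pow_ne_zero d (hF₀ p)) z).trans_eq ?_) ?_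
  · simp only [hpow p, Function.locallyFinsuppWithin.coe_nsmul, Pi.smul_apply, hp]
  · rw [← hp', hpow]
    exact nsmul_le_nsmul_right (divisor_swap_le hF (hF₀ p') z) d

lemma curveOrder_pow [Nonempty ι] (hF : ∀ k, Differentiable ℂ (F k)) (hF₀ : ∀ k, F k ≠ 0) (d : ℕ)
    (r : ℝ) : curveOrder (F ^ d) r = d * curveOrder F r := by
  have haverage : circleAverage (fun z ↦ log ‖Function.swap (F ^ d) z‖) 0 r =
      d * circleAverage (fun z ↦ log ‖Function.swap F z‖) 0 r := by
    simp only [norm_swap_pow, log_pow, ← smul_eq_mul]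
    exact circleAverage_fun_smul
  rw [curveOrder, curveOrder, haverage, divisor_swap_pow hF hF₀, map_nsmul, mul_sub,
    Pi.smul_apply, nsmul_eq_mul]

end CurveOrder

lemma circleAverage_log_wronskian_add_le {n : ℕ} {F : Fin (n + 1) → ℂ → ℂ}
    (hF : ∀ k, Differentiable ℂ (F k)) {W : ℂ → ℂ} (hW : Differentiable ℂ W) {r B : ℝ} (hr : 0 ≤ r)
    (hFr : ∀ z ∈ sphere (0 : ℂ) r, ∀ k, F k z ≠ 0) (hWr : ∀ z ∈ sphere (0 : ℂ) r, W z ≠ 0)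
    (hB : ∀ z ∈ sphere (0 : ℂ) r, ‖W z‖ * ‖Function.swap F z‖ ≤ exp B * ∏ k, ‖F k z‖) :
    circleAverage (fun z ↦ log ‖W z‖) 0 r + circleAverage (fun z ↦ log ‖Function.swap F z‖) 0 r ≤
      B + ∑ k, circleAverage (fun z ↦ log ‖F k z‖) 0 r := by
  have hWi := circleIntegrable_log_norm_of_differentiable hW r
  have hswap := circleIntegrable_log_norm_of_differentiable (differentiable_swap hF) r
  have hFi : ∀ k ∈ Finset.univ, CircleIntegrable (fun z ↦ log ‖F k z‖) 0 r := fun k _ ↦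
    circleIntegrable_log_norm_of_differentiable (hF k) r
  rw [← circleAverage_fun_add hWi hswap, ← circleAverage_fun_sum hFi, ← circleAverage_const B 0 r,
    ← circleAverage_fun_add (circleIntegrable_const B 0 r) (CircleIntegrable.fun_sum _ hFi)]
  refine circleAverage_mono (hWi.add hswap)
    ((circleIntegrable_const B 0 r).add (CircleIntegrable.fun_sum _ hFi)) fun z hz ↦ ?_
  rw [abs_of_nonneg hr] at hz
  have hF₀ : ∀ k, ‖F k z‖ ≠ 0 := fun k ↦ norm_ne_zero_iff.2 (hFr z hz k)
  have hW₀ := norm_pos_iff.2 (hWr z hz)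
  have hs₀ := (norm_pos_iff.2 (hFr z hz 0)).trans_le (norm_apply_le_norm_swap 0 z)
  rw [← log_mul hW₀.ne' hs₀.ne', ← log_prod fun k _ ↦ hF₀ k, ← log_exp B,
    ← log_mul (exp_pos _).ne' (Finset.prod_ne_zero_iff.2 fun k _ ↦ hF₀ k)]
  exact log_le_log (by positivity) (hB z hz)

/-- Cartan's second main theorem for `[F₀ : … : Fₙ]` and the hyperplanes `x₀ = 0`, …, `xₙ = 0`.
The divisor `D` bounds the sum of the truncated counting divisors. -/
lemma exists_curveOrder_le_logCounting {n : ℕ} {F : Fin (n + 1) → ℂ → ℂ}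
    (hF : ∀ k, Differentiable ℂ (F k)) (hF₀ : ∀ k, F k ≠ 0) (hsum : ∑ k, F k = 0)
    {q : Fin (n + 1)} (hW : wronskian (q.removeNth F) ≠ 0)
    {D : Function.locallyFinsuppWithin (univ : Set ℂ) ℤ}
    (hD : ∀ z, ∑ k, min (divisor (F k) univ z - divisor (Function.swap F) univ z) (n - 1 : ℕ)
      ≤ D z) :
    ∃ c, ∀ r B, 1 ≤ r → (∀ z ∈ sphere (0 : ℂ) r, ∀ k, F k z ≠ 0) →
      (∀ z ∈ sphere (0 : ℂ) r, wronskian (q.removeNth F) z ≠ 0) →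
      (∀ z ∈ sphere (0 : ℂ) r, ‖wronskian (q.removeNth F) z‖ * ‖Function.swap F z‖ ≤
        exp B * ∏ k, ‖F k z‖) →
      curveOrder F r ≤ logCounting D r + B + c := by
  have hWd : Differentiable ℂ (wronskian (q.removeNth F)) :=
    differentiable_wronskian fun k ↦ hF (q.succAbove k)
  obtain ⟨cW, hcW⟩ := exists_circleAverage_log_norm_eq hWd
  choose c hc using fun k ↦ exists_circleAverage_log_norm_eq (hF k)
  refine ⟨∑ k, c k - cW, fun r B hr hFr hWr hB ↦ ?_⟩
  have hmean := circleAverage_log_wronskian_add_le hF hWd (by linarith) hFr hWr hB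
  have hcount : ∑ k, logCounting (divisor (F k) univ) r ≤
      logCounting (divisor (wronskian (q.removeNth F)) univ) r +
        logCounting (divisor (Function.swap F) univ) r + logCounting D r := by
    have hle : ∑ k, divisor (F k) univ ≤ divisor (wronskian (q.removeNth F)) univ +
        divisor (Function.swap F) univ + D := fun z ↦ by
      simpa using (sum_divisor_le_divisor_wronskian_add hF hF₀ hsum hW z).trans
        (add_le_add_right (hD z) _)
    simpa using logCounting_le hle hr
  simp only [hc _ r hr, Finset.sum_add_distrib] at hmean
  rw [curveOrder]
  linarith [hcW r hr]

/-! ### The lemma on the logarithmic derivative -/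

lemma norm_herglotzRieszKernel_sub_le {R δ : ℝ} (hδ : 0 < δ) {w z ζ : ℂ} (hw : ‖w‖ ≤ R - δ)
    (hz : ‖z‖ ≤ R - δ) (hζ : ‖ζ‖ = R) :
    ‖herglotzRieszKernel 0 w ζ - herglotzRieszKernel 0 z ζ‖ ≤ 2 * R * ‖w - z‖ / δ ^ 2 := by
  have hdist : ∀ {x : ℂ}, ‖x‖ ≤ R - δ → δ ≤ ‖ζ - x‖ := fun {x} hx ↦ by
    linarith [norm_sub_norm_le ζ x]
  have hne : ∀ {x : ℂ}, ‖x‖ ≤ R - δ → ζ - x ≠ 0 := fun hx ↦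
    norm_pos_iff.1 (hδ.trans_le (hdist hx))
  have hsub : herglotzRieszKernel 0 w ζ - herglotzRieszKernel 0 z ζ =
      2 * ζ * (w - z) / ((ζ - w) * (ζ - z)) := by
    have hw₀ := hne hw
    have hz₀ := hne hz
    simp only [herglotzRieszKernel_def, sub_zero]
    field_simp
    ring
  have hR : 0 ≤ R := hζ ▸ norm_nonneg ζ
  rw [hsub, norm_div, norm_mul, norm_mul, norm_mul, Complex.norm_ofNat, hζ, sq]
  gcongr
  exacts [hdist hw, hdist hz]

lemma sub_le_of_harmonicOnNhd {u : ℂ → ℝ} {R δ : ℝ}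
    (hu : InnerProductSpace.HarmonicOnNhd u (closedBall 0 R)) (hδ : 0 < δ) {w z : ℂ}
    (hw : ‖w‖ ≤ R - δ) (hz : ‖z‖ ≤ R - δ) :
    u w - u z ≤ 2 * R * ‖w - z‖ / δ ^ 2 * circleAverage |u| 0 R := by
  have hR : 0 < R := by linarith [norm_nonneg w]
  have hcont : ContinuousOn u (sphere 0 |R|) := fun x hx ↦ by
    rw [abs_of_pos hR] at hx
    exact (hu x (sphere_subset_closedBall hx)).1.continuousAt.continuousWithinAt
  have hmem : ∀ {x : ℂ}, ‖x‖ ≤ R - δ → x ∈ ball (0 : ℂ) R := fun hx ↦ by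
    rw [mem_ball_zero_iff]
    linarith
  have hker : ∀ {x : ℂ}, ‖x‖ ≤ R - δ →
      CircleIntegrable ((Complex.re ∘ herglotzRieszKernel 0 x) • u) 0 R := fun hx ↦
    ((Complex.continuous_re.comp_continuousOn
      (continuousOn_herglotzRieszKernel_sphere (hmem hx))).smul hcont).circleIntegrable'
  rw [← hu.circleAverage_re_herglotzRieszKernel_smul (hmem hw),
    ← hu.circleAverage_re_herglotzRieszKernel_smul (hmem hz),
    ← circleAverage_sub (hker hw) (hker hz), ← smul_eq_mul, ← circleAverage_smul]
  refine circleAverage_mono ((hker hw).sub (hker hz))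
    (hcont.circleIntegrable'.abs.const_smul) fun ζ hζ ↦ ?_
  rw [abs_of_pos hR, mem_sphere_zero_iff_norm] at hζ
  calc _ = (herglotzRieszKernel 0 w ζ - herglotzRieszKernel 0 z ζ).re * u ζ := by
        simp [sub_mul]
    _ ≤ |(herglotzRieszKernel 0 w ζ - herglotzRieszKernel 0 z ζ).re| * |u ζ| :=
        (le_abs_self _).trans_eq (abs_mul _ _)
    _ ≤ 2 * R * ‖w - z‖ / δ ^ 2 * |u ζ| := by
        gcongr
        exact (Complex.abs_re_le_norm _).trans (norm_herglotzRieszKernel_sub_le hδ hw hz hζ)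

lemma circleAverage_abs_log_norm_sub_le {a : ℂ} {R : ℝ} (hR : 1 ≤ R) (ha : ‖a‖ ≤ R) :
    circleAverage (fun z ↦ |log ‖z - a‖|) 0 R ≤ 4 * R := by
  have hlogi : CircleIntegrable (fun z ↦ log ‖z - a‖) 0 R :=
    circleIntegrable_log_norm_of_differentiable (by fun_prop) R
  have hconst : CircleIntegrable (fun _ ↦ 4 * R) 0 R := circleIntegrable_const _ 0 R
  calc circleAverage (fun z ↦ |log ‖z - a‖|) 0 R
      ≤ circleAverage (fun z ↦ 4 * R - log ‖z - a‖) 0 R := by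
        refine circleAverage_mono hlogi.abs (hconst.sub hlogi) fun z hz ↦ ?_
        rw [abs_of_pos (by linarith), mem_sphere_zero_iff_norm] at hz
        have hlog : log ‖z - a‖ ≤ 2 * R :=
          (log_le_self (norm_nonneg _)).trans (by linarith [norm_sub_le z a])
        exact abs_le.2 ⟨by linarith, by linarith⟩
    _ = 4 * R - log R := by
        rw [circleAverage_fun_sub hconst hlogi, circleAverage_const,
          circleAverage_log_norm_sub_const_of_mem_closedBall
            (by simpa using ha.trans (le_abs_self R))]
    _ ≤ 4 * R := by linarith [log_nonneg hR]

lemma abs_log_sub_log_le {x y s : ℝ} (hs : 0 < s) (hy : s ≤ y) (hxy : |x - y| ≤ s / 2) :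
    |log x - log y| ≤ 2 / s * |x - y| := by
  have hx : s / 2 ≤ x := by linarith [(abs_le.1 hxy).1]
  have key : ∀ {u v : ℝ}, s / 2 ≤ u → s / 2 ≤ v → log u - log v ≤ 2 / s * |u - v| := by
    intro u v hu hv
    have hu₀ : 0 < u := by linarith
    have hv₀ : 0 < v := by linarith
    calc log u - log v = log (u / v) := (log_div hu₀.ne' hv₀.ne').symm
      _ ≤ u / v - 1 := log_le_sub_one_of_pos (by positivity)
      _ = (u - v) / v := by rw [sub_div, div_self hv₀.ne']
      _ ≤ |u - v| / (s / 2) := by gcongr; exact le_abs_self _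
      _ = 2 / s * |u - v| := by field_simp
  refine abs_le.2 ⟨?_, key hx (by linarith)⟩
  have := key (by linarith : s / 2 ≤ y) hx
  rw [abs_sub_comm] at this
  linarith

/-- The zeros and poles of `φ` in the closed disk of radius `R` about the origin. -/
noncomputable def zerosAndPoles (φ : ℂ → ℂ) (R : ℝ) : Finset ℂ :=
  (finiteSupport (divisor φ (closedBall 0 R)) (isCompact_closedBall 0 R)).toFinset

/-- The number of zeros and poles of `φ` in the closed disk of radius `R` about the origin, counted
with multiplicity. -/
noncomputable def zeroPoleCount (φ : ℂ → ℂ) (R : ℝ) : ℝ :=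
  ∑ a ∈ zerosAndPoles φ R, |(divisor φ univ a : ℝ)|

section ZerosAndPoles

variable {φ : ℂ → ℂ} {R : ℝ}

lemma divisor_closedBall_eq_divisor_univ (hφ : Meromorphic φ) {a : ℂ} (ha : a ∈ closedBall 0 R) :
    divisor φ (closedBall 0 R) a = divisor φ univ a := by
  rw [divisor_apply hφ.meromorphicOn ha, divisor_apply hφ.meromorphicOn (mem_univ a)]

lemma norm_le_of_mem_zerosAndPoles {a : ℂ} (ha : a ∈ zerosAndPoles φ R) : ‖a‖ ≤ R :=
  mem_closedBall_zero_iff.1 <| (divisor φ (closedBall 0 R)).supportWithinDomain <|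
    (Set.Finite.mem_toFinset _).1 ha

lemma divisor_closedBall_eq_zero_of_notMem {a : ℂ} (ha : a ∉ zerosAndPoles φ R) :
    divisor φ (closedBall 0 R) a = 0 := by
  simpa [zerosAndPoles] using ha

lemma divisor_ne_zero_of_mem_zerosAndPoles (hφ : Meromorphic φ) {a : ℂ}
    (ha : a ∈ zerosAndPoles φ R) : divisor φ univ a ≠ 0 := by
  rw [← divisor_closedBall_eq_divisor_univ hφ
    (mem_closedBall_zero_iff.2 (norm_le_of_mem_zerosAndPoles ha))]
  exact (Set.Finite.mem_toFinset _).1 ha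

lemma zeroPoleCount_nonneg : 0 ≤ zeroPoleCount φ R := Finset.sum_nonneg fun _ _ ↦ abs_nonneg _

lemma card_zerosAndPoles_le_zeroPoleCount (hφ : Meromorphic φ) :
    ((zerosAndPoles φ R).card : ℝ) ≤ zeroPoleCount φ R := by
  rw [Finset.card_eq_sum_ones, Nat.cast_sum, zeroPoleCount]
  refine Finset.sum_le_sum fun a ha ↦ ?_
  exact_mod_cast Int.one_le_abs (divisor_ne_zero_of_mem_zerosAndPoles hφ ha)

lemma exists_eventuallyEq_prod_mul (hφ : Meromorphic φ) (hφ' : ∀ z, meromorphicOrderAt φ z ≠ ⊤) :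
    ∃ h : ℂ → ℂ, AnalyticOnNhd ℂ h (closedBall 0 R) ∧ (∀ z ∈ closedBall 0 R, h z ≠ 0) ∧
      φ =ᶠ[codiscreteWithin (closedBall 0 R)]
        fun w ↦ (∏ a ∈ zerosAndPoles φ R, (w - a) ^ divisor φ univ a) * h w := by
  obtain ⟨h, hh, hh₀, heq⟩ := hφ.meromorphicOn.extract_zeros_poles (fun u ↦ hφ' u)
    (finiteSupport (divisor φ (closedBall 0 R)) (isCompact_closedBall 0 R))
  refine ⟨h, hh, fun z hz ↦ hh₀ ⟨z, hz⟩, heq.trans (Eventually.of_forall fun w ↦ ?_)⟩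
  have hprod : (∏ᶠ u, (· - u) ^ divisor φ (closedBall 0 R) u : ℂ → ℂ) =
      ∏ a ∈ zerosAndPoles φ R, (· - a) ^ divisor φ (closedBall 0 R) a := by
    refine finprod_eq_prod_of_mulSupport_subset _ fun u hu ↦ ?_
    contrapose! hu
    simp [divisor_closedBall_eq_zero_of_notMem hu]
  rw [hprod, Pi.smul_apply', smul_eq_mul, Finset.prod_apply]
  congr 1
  refine Finset.prod_congr rfl fun a ha ↦ ?_
  rw [divisor_closedBall_eq_divisor_univ hφ
    (mem_closedBall_zero_iff.2 (norm_le_of_mem_zerosAndPoles ha)), Pi.pow_apply]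

end ZerosAndPoles

lemma log_norm_prod_zpow_mul {S : Finset ℂ} {w : ℂ} (hw : w ∉ S) (D : ℂ → ℤ) {c : ℂ} (hc : c ≠ 0) :
    log ‖(∏ a ∈ S, (w - a) ^ D a) * c‖ = ∑ a ∈ S, D a * log ‖w - a‖ + log ‖c‖ := by
  have hne : ∀ a ∈ S, ‖w - a‖ ^ D a ≠ 0 := fun a ha ↦
    zpow_ne_zero _ (norm_ne_zero_iff.2 (sub_ne_zero.2 (ne_of_mem_of_not_mem ha hw).symm))
  simp only [norm_mul, norm_prod, norm_zpow]
  rw [log_mul (Finset.prod_ne_zero_iff.2 hne) (norm_ne_zero_iff.2 hc), log_prod hne]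
  simp only [log_zpow]

lemma circleAverage_abs_sub_sum_log_norm_sub_le {u : ℂ → ℝ} {R : ℝ} (hu : CircleIntegrable u 0 R)
    (hR : 1 ≤ R) {S : Finset ℂ} (hS : ∀ a ∈ S, ‖a‖ ≤ R) (D : ℂ → ℤ) :
    circleAverage (fun z ↦ |u z - ∑ a ∈ S, D a * log ‖z - a‖|) 0 R ≤
      circleAverage (fun z ↦ |u z|) 0 R + 4 * R * ∑ a ∈ S, |(D a : ℝ)| := by
  have hsub : ∀ a, CircleIntegrable (fun z ↦ log ‖z - a‖) 0 R := fun a ↦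
    circleIntegrable_log_norm_of_differentiable (by fun_prop) R
  have habs : ∀ a ∈ S, CircleIntegrable (fun z ↦ |(D a : ℝ)| * |log ‖z - a‖|) 0 R :=
    fun a _ ↦ (hsub a).abs.const_mul _
  have hsum : CircleIntegrable (fun z ↦ ∑ a ∈ S, D a * log ‖z - a‖) 0 R :=
    CircleIntegrable.fun_sum S fun a _ ↦ (hsub a).const_mul _
  calc circleAverage (fun z ↦ |u z - ∑ a ∈ S, D a * log ‖z - a‖|) 0 R
      ≤ circleAverage (fun z ↦ |u z| + ∑ a ∈ S, |(D a : ℝ)| * |log ‖z - a‖|) 0 R := by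
        refine circleAverage_mono (hu.sub hsum).abs (hu.abs.add (.fun_sum S habs)) fun z _ ↦ ?_
        refine (abs_sub _ _).trans ?_
        gcongr
        simpa only [abs_mul] using Finset.abs_sum_le_sum_abs (fun a ↦ D a * log ‖z - a‖) S
    _ = circleAverage (fun z ↦ |u z|) 0 R +
          ∑ a ∈ S, |(D a : ℝ)| * circleAverage (fun z ↦ |log ‖z - a‖|) 0 R := by
        rw [circleAverage_fun_add (f₁ := fun z ↦ |u z|) hu.abs (.fun_sum S habs),
          circleAverage_fun_sum habs]
        simp only [← smul_eq_mul, circleAverage_fun_smul]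
    _ ≤ circleAverage (fun z ↦ |u z|) 0 R + ∑ a ∈ S, |(D a : ℝ)| * (4 * R) := by
        gcongr with a ha
        exact circleAverage_abs_log_norm_sub_le hR (hS a ha)
    _ = _ := by rw [← Finset.sum_mul, mul_comm]

lemma circleAverage_abs_log_norm_le_of_eventuallyEq {φ h : ℂ → ℂ} {R : ℝ} (hR : 1 ≤ R)
    (hφ : Meromorphic φ) (hh₀ : ∀ z ∈ closedBall 0 R, h z ≠ 0)
    (heq : φ =ᶠ[codiscreteWithin (closedBall 0 R)]
      fun w ↦ (∏ a ∈ zerosAndPoles φ R, (w - a) ^ divisor φ univ a) * h w) :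
    circleAverage |fun z ↦ log ‖h z‖| 0 R ≤
      circleAverage (fun z ↦ |log ‖φ z‖|) 0 R + 4 * R * zeroPoleCount φ R := by
  have hsphere : sphere 0 |R| ⊆ closedBall (0 : ℂ) R := by
    rw [abs_of_pos (by linarith)]
    exact sphere_subset_closedBall
  have hlog : |fun z ↦ log ‖h z‖| =ᶠ[codiscreteWithin (sphere 0 |R|)]
      fun z ↦ |log ‖φ z‖ - ∑ a ∈ zerosAndPoles φ R, divisor φ univ a * log ‖z - a‖| := by
    filter_upwards [heq.filter_mono (codiscreteWithin_mono hsphere),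
      compl_finite_mem_codiscreteWithin (zerosAndPoles φ R).finite_toSet,
      self_mem_codiscreteWithin _] with z hz hzS hzR
    rw [hz, log_norm_prod_zpow_mul hzS _ (hh₀ z (hsphere hzR)), add_sub_cancel_left, Pi.abs_apply]
  rw [circleAverage_congr_codiscreteWithin hlog (by linarith)]
  exact circleAverage_abs_sub_sum_log_norm_sub_le (circleIntegrable_log_norm fun z _ ↦ hφ z) hR
    (fun a ↦ norm_le_of_mem_zerosAndPoles) _

lemma log_norm_prod_mul_sub_le {h : ℂ → ℂ} {R δ s N M : ℝ}
    (hh : AnalyticOnNhd ℂ h (closedBall 0 R)) (hh₀ : ∀ z ∈ closedBall 0 R, h z ≠ 0)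
    (hM : circleAverage |fun z ↦ log ‖h z‖| 0 R ≤ M) {S : Finset ℂ} {D : ℂ → ℤ}
    (hN : ∑ a ∈ S, |(D a : ℝ)| ≤ N) (hδ : 0 < δ) (hs : 0 < s) {w z : ℂ} (hw : ‖w‖ ≤ R - δ)
    (hz : ‖z‖ ≤ R - δ) (hsz : ∀ a ∈ S, s ≤ ‖z - a‖) (hwz : ‖w - z‖ ≤ s / 2) :
    log ‖(∏ a ∈ S, (w - a) ^ D a) * h w‖ - log ‖(∏ a ∈ S, (z - a) ^ D a) * h z‖ ≤
      (2 / s * N + 2 * R / δ ^ 2 * M) * ‖w - z‖ := by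
  have hR : 0 ≤ R := by linarith [norm_nonneg w]
  have hmem : ∀ {x : ℂ}, ‖x‖ ≤ R - δ → x ∈ closedBall (0 : ℂ) R := fun hx ↦
    mem_closedBall_zero_iff.2 (by linarith)
  have hzS : z ∉ S := fun hzS ↦ by simpa using hs.trans_le (hsz z hzS)
  have hwS : w ∉ S := fun hwS ↦ by linarith [hsz w hwS, norm_sub_rev w z]
  have hlin : ∑ a ∈ S, D a * log ‖w - a‖ - ∑ a ∈ S, D a * log ‖z - a‖ ≤
      N * (2 / s * ‖w - z‖) := by
    calc ∑ a ∈ S, D a * log ‖w - a‖ - ∑ a ∈ S, D a * log ‖z - a‖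
        ≤ ∑ a ∈ S, |(D a : ℝ)| * |log ‖w - a‖ - log ‖z - a‖| := by
          simp only [← Finset.sum_sub_distrib, ← mul_sub, ← abs_mul]
          exact Finset.sum_le_sum fun a _ ↦ le_abs_self _
      _ ≤ ∑ a ∈ S, |(D a : ℝ)| * (2 / s * ‖w - z‖) := by
          gcongr with a ha
          have hdist : |‖w - a‖ - ‖z - a‖| ≤ ‖w - z‖ := by
            simpa using abs_norm_sub_norm_le (w - a) (z - a)
          refine (abs_log_sub_log_le hs (hsz a ha) (hdist.trans hwz)).trans ?_
          gcongr
      _ ≤ N * (2 / s * ‖w - z‖) := by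
          rw [← Finset.sum_mul]
          gcongr
  have hharm : log ‖h w‖ - log ‖h z‖ ≤ 2 * R * ‖w - z‖ / δ ^ 2 * M :=
    (sub_le_of_harmonicOnNhd (u := fun z ↦ log ‖h z‖)
      (fun x hx ↦ (hh x hx).harmonicAt_log_norm (hh₀ x hx)) hδ hw hz).trans (by gcongr)
  rw [log_norm_prod_zpow_mul hwS D (hh₀ w (hmem hw)),
    log_norm_prod_zpow_mul hzS D (hh₀ z (hmem hz))]
  calc _ ≤ N * (2 / s * ‖w - z‖) + 2 * R * ‖w - z‖ / δ ^ 2 * M := by linarith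
    _ = _ := by ring

section LogarithmicDerivative

variable {φ : ℂ → ℂ} {R : ℝ}

lemma analyticAt_prod_zpow_mul {S : Finset ℂ} {w : ℂ} (hw : w ∉ S) (D : ℂ → ℤ) {h : ℂ → ℂ}
    (hh : AnalyticAt ℂ h w) : AnalyticAt ℂ (fun w ↦ (∏ a ∈ S, (w - a) ^ D a) * h w) w :=
  (Finset.analyticAt_fun_prod _ fun _ ha ↦ AnalyticAt.fun_zpow
    (analyticAt_id.sub analyticAt_const) (sub_ne_zero.2 (ne_of_mem_of_not_mem ha hw).symm)).mul hh

lemma eventuallyEq_nhds_of_eventuallyEq_codiscreteWithin {U : Set ℂ} {f g : ℂ → ℂ} {z : ℂ}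
    (hU : U ∈ 𝓝 z) (hf : AnalyticAt ℂ f z) (hg : AnalyticAt ℂ g z)
    (h : f =ᶠ[codiscreteWithin U] g) : f =ᶠ[𝓝 z] g := by
  refine (hf.frequently_eq_iff_eventually_eq hg).1 (Eventually.frequently ?_)
  filter_upwards [mem_codiscreteWithin_iff_forall_mem_nhdsNE.1 h z (mem_of_mem_nhds hU),
    mem_nhdsWithin_of_mem_nhds hU] with w hw hwU
  exact hw.resolve_right fun hwU' ↦ hwU' hwU

lemma log_norm_prod_mul_sub_le_one {h : ℂ → ℂ} {X : ℝ} (hX : 12 ≤ X) (hRX : R ≤ X)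
    (hh : AnalyticOnNhd ℂ h (closedBall 0 R)) (hh₀ : ∀ z ∈ closedBall 0 R, h z ≠ 0)
    (hM : circleAverage |fun z ↦ log ‖h z‖| 0 R ≤ 5 * X ^ 2) {S : Finset ℂ} {D : ℂ → ℤ}
    (hN : ∑ a ∈ S, |(D a : ℝ)| ≤ X) {z w : ℂ} (hz : ‖z‖ + 2 / X ^ 3 ≤ R)
    (hsz : ∀ a ∈ S, 1 / X ^ 3 ≤ ‖z - a‖) (hwz : ‖w - z‖ ≤ 1 / X ^ 10) :
    log ‖(∏ a ∈ S, (w - a) ^ D a) * h w‖ - log ‖(∏ a ∈ S, (z - a) ^ D a) * h z‖ ≤ 1 := by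
  have hX₀ : 0 < X := by linarith
  have hη : 1 / X ^ 10 ≤ 1 / X ^ 3 / 2 := by
    rw [div_div]
    gcongr
    nlinarith [pow_le_pow_right₀ (by linarith : 1 ≤ X) (by norm_num : 4 ≤ 10), pow_pos hX₀ 3]
  have htwo : 2 / X ^ 3 = 1 / X ^ 3 + 1 / X ^ 3 := by ring
  have hpos : 0 < 1 / X ^ 3 := by positivity
  have hw : ‖w‖ ≤ R - 1 / X ^ 3 := by
    have := norm_add_le z (w - z)
    rw [add_sub_cancel] at this
    linarith
  refine (log_norm_prod_mul_sub_le hh hh₀ hM hN hpos hpos hw (by linarith) hsz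
    (hwz.trans hη)).trans ?_
  calc (2 / (1 / X ^ 3) * X + 2 * R / (1 / X ^ 3) ^ 2 * (5 * X ^ 2)) * ‖w - z‖
      ≤ (2 / (1 / X ^ 3) * X + 2 * X / (1 / X ^ 3) ^ 2 * (5 * X ^ 2)) * (1 / X ^ 10) := by gcongr
    _ = 2 / X ^ 6 + 10 / X := by
      field_simp
      ring
    _ ≤ 2 / X + 10 / X := by
      gcongr
      exact le_self_pow₀ (by linarith) (by norm_num)
    _ ≤ 1 := by
      rw [← add_div, div_le_one hX₀]
      linarith

/-- Cauchy's estimate on a disk so small, in terms of one large parameter `X`, that `‖φ‖` varies by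
at most a factor `e` on it. -/
lemma norm_iteratedDeriv_le_mul_pow {X : ℝ} (hR : 1 ≤ R) (hX : 12 ≤ X) (hRX : R ≤ X)
    (hφ : Meromorphic φ) (hφ' : ∀ z, meromorphicOrderAt φ z ≠ ⊤) (hN : zeroPoleCount φ R ≤ X)
    (hL : circleAverage (fun z ↦ |log ‖φ z‖|) 0 R ≤ X) {z : ℂ} (hz : ‖z‖ + 2 / X ^ 3 ≤ R)
    (hφz : AnalyticAt ℂ φ z) (hsz : ∀ a ∈ zerosAndPoles φ R, 1 / X ^ 3 ≤ ‖z - a‖) (i : ℕ) :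
    ‖iteratedDeriv i φ z‖ ≤ i.factorial * (exp 1 * ‖φ z‖) * X ^ (10 * i) := by
  obtain ⟨h, hh, hh₀, heq⟩ := exists_eventuallyEq_prod_mul (R := R) hφ hφ'
  set S := zerosAndPoles φ R
  set ψ : ℂ → ℂ := fun w ↦ (∏ a ∈ S, (w - a) ^ divisor φ univ a) * h w
  have : 0 < X := by linarith
  have hη : 1 / X ^ 10 < 1 / X ^ 3 :=
    one_div_lt_one_div_of_lt (by positivity) (pow_lt_pow_right₀ (by linarith) (by norm_num))
  have htwo : 2 / X ^ 3 = 1 / X ^ 3 + 1 / X ^ 3 := by ring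
  have hmem : ∀ w ∈ closedBall z (1 / X ^ 10), w ∉ S ∧ w ∈ ball 0 R := fun w hw ↦ by
    rw [mem_closedBall_iff_norm] at hw
    refine ⟨fun hwS ↦ by linarith [hsz w hwS, norm_sub_rev z w], mem_ball_zero_iff.2 ?_⟩
    linarith [norm_le_norm_add_norm_sub z w, norm_sub_rev z w, show 0 < 1 / X ^ 3 by positivity]
  have hψan : ∀ w ∈ closedBall z (1 / X ^ 10), AnalyticAt ℂ ψ w := fun w hw ↦
    analyticAt_prod_zpow_mul (hmem w hw).1 _ (hh w (ball_subset_closedBall (hmem w hw).2))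
  have hψ₀ : ∀ w ∈ closedBall z (1 / X ^ 10), 0 < ‖ψ w‖ := fun w hw ↦
    norm_pos_iff.2 <| mul_ne_zero (Finset.prod_ne_zero_iff.2 fun a ha ↦ zpow_ne_zero _
      (sub_ne_zero.2 (ne_of_mem_of_not_mem ha (hmem w hw).1).symm))
      (hh₀ w (ball_subset_closedBall (hmem w hw).2))
  have hzmem : z ∈ closedBall z (1 / X ^ 10) := mem_closedBall_self (by positivity)
  have hφψ : φ =ᶠ[𝓝 z] ψ := eventuallyEq_nhds_of_eventuallyEq_codiscreteWithin
    (closedBall_mem_nhds_of_mem (hmem z hzmem).2) hφz (hψan z hzmem) heq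
  have hM : circleAverage |fun z ↦ log ‖h z‖| 0 R ≤ 5 * X ^ 2 :=
    calc _ ≤ _ := circleAverage_abs_log_norm_le_of_eventuallyEq hR hφ hh₀ heq
      _ ≤ X + 4 * X * X := by gcongr; exact zeroPoleCount_nonneg
      _ ≤ 5 * X ^ 2 := by nlinarith
  have hbound : ∀ w ∈ sphere z (1 / X ^ 10), ‖ψ w‖ ≤ exp 1 * ‖ψ z‖ := fun w hw ↦ by
    have hwz : ‖w - z‖ ≤ 1 / X ^ 10 := (mem_sphere_iff_norm.1 hw).le
    rw [← log_le_log_iff (hψ₀ w (sphere_subset_closedBall hw)) (mul_pos (exp_pos 1) (hψ₀ z hzmem)),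
      log_mul (exp_pos 1).ne' (hψ₀ z hzmem).ne', log_exp]
    linarith [log_norm_prod_mul_sub_le_one hX hRX hh hh₀ hM hN hz hsz hwz]
  rw [hφψ.iteratedDeriv_eq, hφψ.self_of_nhds]
  refine (Complex.norm_iteratedDeriv_le_of_forall_mem_sphere_norm_le i (by positivity)
    (DifferentiableOn.diffContOnCl fun w hw ↦ ?_) hbound).trans_eq ?_
  · exact (hψan w (closure_ball_subset_closedBall hw)).differentiableAt.differentiableWithinAt
  · rw [pow_mul, one_div, inv_pow, div_inv_eq_mul]

lemma abs_log_eq_posLog_add_posLog_inv (x : ℝ) : |log x| = log⁺ x + log⁺ x⁻¹ := by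
  rw [← half_mul_log_add_log_abs, ← half_mul_log_add_log_abs, log_inv, abs_neg]
  ring

lemma circleAverage_abs_log_norm_le (hφ : Meromorphic φ) (hR : 1 ≤ R) :
    circleAverage (fun z ↦ |log ‖φ z‖|) 0 R ≤ characteristic φ ⊤ R + characteristic φ⁻¹ ⊤ R := by
  have heq : (fun z ↦ |log ‖φ z‖|) = fun z ↦ log⁺ ‖φ z‖ + log⁺ ‖φ⁻¹ z‖ := by
    ext z
    rw [Pi.inv_apply, norm_inv, abs_log_eq_posLog_add_posLog_inv]
  rw [heq, circleAverage_fun_add (circleIntegrable_posLog_norm fun z _ ↦ hφ z)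
    (circleIntegrable_posLog_norm fun z _ ↦ hφ.inv z), ← proximity_top, ← proximity_top]
  exact add_le_add (le_add_of_nonneg_right (logCounting_nonneg hR))
    (le_add_of_nonneg_right (logCounting_nonneg hR))

lemma zeroPoleCount_mul_log_le {ρ : ℝ} (hρ : 1 ≤ ρ) (hR : ρ ≤ R) :
    zeroPoleCount φ ρ * log (R / ρ) ≤ characteristic φ ⊤ R + characteristic φ⁻¹ ⊤ R := by
  have hzeros := sum_mul_log_le_logCounting (posPart_nonneg (divisor φ univ)) (zerosAndPoles φ ρ)
    (fun _ ↦ norm_le_of_mem_zerosAndPoles) hρ hR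
  have hpoles := sum_mul_log_le_logCounting (negPart_nonneg (divisor φ univ)) (zerosAndPoles φ ρ)
    (fun _ ↦ norm_le_of_mem_zerosAndPoles) hρ hR
  rw [← logCounting_zero, ← logCounting_inv] at hzeros
  rw [← logCounting_top] at hpoles
  have hsplit : zeroPoleCount φ ρ = ∑ a ∈ zerosAndPoles φ ρ, ((divisor φ univ)⁺ a : ℝ) +
      ∑ a ∈ zerosAndPoles φ ρ, ((divisor φ univ)⁻ a : ℝ) := by
    rw [← Finset.sum_add_distrib]
    refine Finset.sum_congr rfl fun a _ ↦ ?_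
    rw [posPart_apply, negPart_apply]
    exact_mod_cast (posPart_add_negPart (divisor φ univ a)).symm
  have hle : ∀ ψ : ℂ → ℂ, logCounting ψ ⊤ R ≤ characteristic ψ ⊤ R := fun ψ ↦
    le_add_of_nonneg_left (proximity_nonneg _)
  rw [hsplit, add_mul]
  linarith [hle φ, hle φ⁻¹]

lemma exists_characteristic_add_characteristic_inv_le (hφ : Meromorphic φ) :
    ∃ A, 2 ≤ A ∧ ∀ R, 1 ≤ R →
      characteristic φ ⊤ R + characteristic φ⁻¹ ⊤ R ≤ A * (1 + characteristic φ ⊤ R) := by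
  set M := max |log ‖φ 0‖| |log ‖meromorphicTrailingCoeffAt φ 0‖|
  have hM : 0 ≤ M := le_max_of_le_left (abs_nonneg _)
  refine ⟨2 + M, by linarith, fun R hR ↦ ?_⟩
  have hinv := (abs_le.1 (characteristic_sub_characteristic_inv_le hφ (R := R))).1
  nlinarith [characteristic_nonneg (f := φ) (a := ⊤) hR]

lemma div_le_log_div_midpoint {r : ℝ} (hr : 0 < r) (hrR : r < R) :
    (R - r) / (2 * R) ≤ log (R / ((r + R) / 2)) := by
  have hR : 0 < R := hr.trans hrR
  refine le_trans (le_of_eq ?_) (one_sub_inv_le_log_of_pos (by positivity))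
  field_simp
  ring

lemma exists_zeroPoleCount_le (hφ : Meromorphic φ) :
    ∃ A, 0 ≤ A ∧ ∀ r R, 1 ≤ r → r < R →
      zeroPoleCount φ ((r + R) / 2) ≤ A * (1 + characteristic φ ⊤ R) * (R / (R - r)) ∧
      circleAverage (fun z ↦ |log ‖φ z‖|) 0 ((r + R) / 2) ≤
        A * (1 + characteristic φ ⊤ R) * (R / (R - r)) := by
  obtain ⟨A, hA, h⟩ := exists_characteristic_add_characteristic_inv_le hφ
  refine ⟨2 * A, by linarith, fun r R hr hrR ↦ ?_⟩
  have hΔ : 0 < R - r := sub_pos.2 hrR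
  have hmid : 1 ≤ (r + R) / 2 := by linarith
  have hmidR : (r + R) / 2 ≤ R := by linarith
  have hT : 0 ≤ characteristic φ ⊤ R := characteristic_nonneg (by linarith)
  constructor
  · have hcount : zeroPoleCount φ ((r + R) / 2) * ((R - r) / (2 * R)) ≤
        A * (1 + characteristic φ ⊤ R) :=
      calc _ ≤ zeroPoleCount φ ((r + R) / 2) * log (R / ((r + R) / 2)) :=
          mul_le_mul_of_nonneg_left (div_le_log_div_midpoint (by linarith) hrR)
            zeroPoleCount_nonneg
        _ ≤ _ := (zeroPoleCount_mul_log_le hmid hmidR).trans (h R (by linarith))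
    rw [← le_div_iff₀ (div_pos hΔ (by linarith))] at hcount
    refine hcount.trans_eq ?_
    field_simp
  · have hone : 1 ≤ R / (R - r) := (one_le_div hΔ).2 (by linarith)
    have hmono : ∀ {f : ℂ → ℂ}, Meromorphic f →
        characteristic f ⊤ ((r + R) / 2) ≤ characteristic f ⊤ R := fun hf ↦
      characteristic_monotoneOn hf (show 0 < (r + R) / 2 by linarith) (show 0 < R by linarith) hmidR
    calc _ ≤ _ := circleAverage_abs_log_norm_le hφ hmid
      _ ≤ characteristic φ ⊤ R + characteristic φ⁻¹ ⊤ R := add_le_add (hmono hφ) (hmono hφ.inv)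
      _ ≤ A * (1 + characteristic φ ⊤ R) := h R (by linarith)
      _ ≤ 2 * A * (1 + characteristic φ ⊤ R) * (R / (R - r)) := by
        refine le_trans ?_ (le_mul_of_one_le_right (by positivity) hone)
        gcongr
        linarith

lemma log_mul_one_add_mul_le_nevanlinnaError {A t r : ℝ} (hA : 1 ≤ A) (ht : 0 ≤ t) (hR : 1 ≤ R)
    (hrR : r < R) :
    log (A * (1 + t) * (R / (R - r))) ≤ (log A + 1) * nevanlinnaError t r R := by
  have : 0 < R - r := sub_pos.2 hrR
  have hle : ∀ x : ℝ, log x ≤ log⁺ x := fun x ↦ le_max_right _ _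
  have hlog2 : log (1 + t) ≤ 1 + log⁺ t := by
    have h := posLog_add (x := 1) (y := t)
    rw [posLog_one] at h
    linarith [hle (1 + t), log_two_lt_d9]
  have hsplit : log (A * (1 + t) * (R / (R - r))) =
      log A + log (1 + t) + (log R + log (1 / (R - r))) := by
    rw [log_mul (by positivity) (by positivity), log_mul (by positivity) (by positivity),
      div_eq_mul_one_div, log_mul (by positivity) (by positivity)]
  have herr : log (A * (1 + t) * (R / (R - r))) ≤ log A + nevanlinnaError t r R := by
    rw [hsplit, nevanlinnaError]
    linarith [hle R, hle (1 / (R - r))]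
  rw [add_mul, one_mul]
  exact herr.trans (add_le_add_left
    (le_mul_of_one_le_right (log_nonneg hA) (one_le_nevanlinnaError t r R)) _)

end LogarithmicDerivative

lemma exists_mem_Icc_le_abs_sub (r : ℝ) {Δ : ℝ} (hΔ : 0 < Δ) (M : Finset ℝ) {Z : Set ℝ}
    (hZ : Z.Finite) :
    ∃ x ∈ Icc r (r + Δ), x ∉ Z ∧ ∀ m ∈ M, Δ / (4 * (M.card + 1)) ≤ |x - m| := by
  by_contra! hcon
  set s := Δ / (4 * (M.card + 1)) with hs
  have hcover : Icc r (r + Δ) ⊆ Z ∪ ⋃ m ∈ M, ball m s := fun x hx ↦ by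
    by_cases hxZ : x ∈ Z
    · exact Or.inl hxZ
    · obtain ⟨m, hm, hlt⟩ := hcon x hx hxZ
      exact Or.inr (mem_biUnion hm (by rwa [mem_ball, Real.dist_eq]))
  have hvol : ENNReal.ofReal Δ ≤ ENNReal.ofReal (M.card * (2 * s)) :=
    calc ENNReal.ofReal Δ = MeasureTheory.volume (Icc r (r + Δ)) := by
          rw [Real.volume_Icc, add_sub_cancel_left]
      _ ≤ MeasureTheory.volume Z + MeasureTheory.volume (⋃ m ∈ M, ball m s) :=
          (MeasureTheory.measure_mono hcover).trans (MeasureTheory.measure_union_le _ _)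
      _ ≤ 0 + ∑ m ∈ M, MeasureTheory.volume (ball m s) := by
          gcongr
          · exact (hZ.measure_zero _).le
          · exact MeasureTheory.measure_biUnion_finset_le _ _
      _ = ENNReal.ofReal (M.card * (2 * s)) := by
          simp only [Real.volume_ball, Finset.sum_const, zero_add, nsmul_eq_mul]
          rw [ENNReal.ofReal_mul (p := (M.card : ℝ)) (by positivity), ENNReal.ofReal_natCast]
  rw [ENNReal.ofReal_le_ofReal_iff (by positivity)] at hvol
  have hmul : s * (4 * (M.card + 1)) = Δ := div_mul_cancel₀ _ (by positivity)
  have hs₀ : 0 < s := by positivity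
  nlinarith

lemma factorial_mul_exp_mul_pow_le {A t r R : ℝ} (hA : 1 ≤ A) (ht : 0 ≤ t) (hR : 1 ≤ R)
    (hrR : r < R) (n : ℕ) :
    n.factorial * exp 1 * (A * (1 + t) * (R / (R - r))) ^ (10 * n) ≤
      exp ((log n.factorial + 1 + 10 * n * (log A + 1)) * nevanlinnaError t r R) := by
  have : 0 < R - r := sub_pos.2 hrR
  have : 0 ≤ log (n.factorial : ℝ) := log_natCast_nonneg _
  rw [← log_le_iff_le_exp (by positivity), log_mul (by positivity) (by positivity),
    log_mul (by positivity) (by positivity), log_exp, log_pow]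
  push_cast
  calc _ ≤ (log n.factorial + 1) * nevanlinnaError t r R +
        10 * n * ((log A + 1) * nevanlinnaError t r R) := by
        gcongr
        · exact le_mul_of_one_le_right (by positivity) (one_le_nevanlinnaError t r R)
        · exact log_mul_one_add_mul_le_nevanlinnaError hA ht hR hrR
    _ = _ := by ring

section Family

variable {ι : Type*} [Fintype ι] {φ : ι → ℂ → ℂ}

lemma characteristic_le_sum_characteristic {R : ℝ} (hR : 1 ≤ R) (k : ι) :
    characteristic (φ k) ⊤ R ≤ ∑ k, characteristic (φ k) ⊤ R :=
  Finset.single_le_sum (f := fun k ↦ characteristic (φ k) ⊤ R)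
    (fun _ _ ↦ characteristic_nonneg hR) (Finset.mem_univ k)

lemma sum_characteristic_nonneg {R : ℝ} (hR : 1 ≤ R) : 0 ≤ ∑ k, characteristic (φ k) ⊤ R :=
  Finset.sum_nonneg fun _ _ ↦ characteristic_nonneg hR

lemma exists_forall_zeroPoleCount_le (hφ : ∀ k, Meromorphic (φ k)) (A₀ : ℝ) :
    ∃ A, A₀ ≤ A ∧ ∀ r R, 1 ≤ r → r < R → ∀ k,
      zeroPoleCount (φ k) ((r + R) / 2) ≤
        A * (1 + ∑ k, characteristic (φ k) ⊤ R) * (R / (R - r)) ∧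
      circleAverage (fun z ↦ |log ‖φ k z‖|) 0 ((r + R) / 2) ≤
        A * (1 + ∑ k, characteristic (φ k) ⊤ R) * (R / (R - r)) := by
  choose A hA h using fun k ↦ exists_zeroPoleCount_le (hφ k)
  refine ⟨|A₀| + ∑ k, A k, le_add_of_le_of_nonneg (le_abs_self A₀)
    (Finset.sum_nonneg fun k _ ↦ hA k), fun r R hr hrR k ↦ ?_⟩
  have hR : 1 ≤ R := hr.trans hrR.le
  have hle : A k * (1 + characteristic (φ k) ⊤ R) * (R / (R - r)) ≤
      (|A₀| + ∑ k, A k) * (1 + ∑ k, characteristic (φ k) ⊤ R) * (R / (R - r)) := by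
    have : 0 < R - r := sub_pos.2 hrR
    have hk : 0 ≤ characteristic (φ k) ⊤ R := characteristic_nonneg hR
    have : 0 ≤ 1 + characteristic (φ k) ⊤ R := by linarith
    have hAk : A k ≤ |A₀| + ∑ k, A k :=
      le_add_of_nonneg_of_le (abs_nonneg A₀)
        (Finset.single_le_sum (fun k _ ↦ hA k) (Finset.mem_univ k))
    have := (hA k).trans hAk
    gcongr
    exact characteristic_le_sum_characteristic hR k
  exact ⟨(h k r R hr hrR).1.trans hle, (h k r R hr hrR).2.trans hle⟩

/-- Only finitely many circles carry a point of `Z`, and the moduli of the zeros and poles of the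
`φ k` cannot crowd the interval `[r, r + (R - r) / 4]`. -/
lemma exists_mem_Icc_forall_le_norm_sub (hφ : ∀ k, Meromorphic (φ k)) {Z : Set ℂ}
    (hZ : ∀ ρ, (Z ∩ closedBall 0 ρ).Finite) {r R X : ℝ} (hrR : r < R) (hR : R ≤ r + 1)
    (hX : 32 * (Fintype.card ι + 1) / (R - r) ≤ X)
    (hN : ∀ k, zeroPoleCount (φ k) ((r + R) / 2) ≤ X) :
    ∃ ρ ∈ Icc r R, ρ + 2 / X ^ 3 ≤ (r + R) / 2 ∧ (∀ z ∈ sphere (0 : ℂ) ρ, z ∉ Z) ∧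
      ∀ z ∈ sphere (0 : ℂ) ρ, ∀ k, ∀ a ∈ zerosAndPoles (φ k) ((r + R) / 2),
        1 / X ^ 3 ≤ ‖z - a‖ := by
  classical
  set Δ := R - r
  have hΔ : 0 < Δ := sub_pos.2 hrR
  have hm : (0 : ℝ) ≤ Fintype.card ι := Nat.cast_nonneg _
  rw [div_le_iff₀ hΔ] at hX
  have hX₁ : 1 ≤ X := by nlinarith
  have hX₂ : X ≤ X ^ 2 := le_self_pow₀ hX₁ two_ne_zero
  set M : Finset ℝ := Finset.univ.biUnion fun k ↦ (zerosAndPoles (φ k) ((r + R) / 2)).image norm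
  have hM : (M.card : ℝ) ≤ Fintype.card ι * X :=
    calc (M.card : ℝ) ≤ ∑ k, ((zerosAndPoles (φ k) ((r + R) / 2)).card : ℝ) := by
          exact_mod_cast Finset.card_biUnion_le.trans
            (Finset.sum_le_sum fun _ _ ↦ Finset.card_image_le)
      _ ≤ ∑ _k : ι, X :=
          Finset.sum_le_sum fun k _ ↦ (card_zerosAndPoles_le_zeroPoleCount (hφ k)).trans (hN k)
      _ = Fintype.card ι * X := by rw [Finset.sum_const, nsmul_eq_mul, Finset.card_univ]
  obtain ⟨ρ, ⟨hrρ, hρ⟩, hρZ, hρM⟩ := exists_mem_Icc_le_abs_sub r (by positivity : 0 < Δ / 4) M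
    ((hZ R).image norm)
  have hρR : ρ ≤ R := by linarith
  have hgap : 2 / X ^ 3 ≤ Δ / 4 := by
    rw [div_le_div_iff₀ (by positivity) (by norm_num)]
    nlinarith
  have hdist : 1 / X ^ 3 ≤ Δ / 4 / (4 * (M.card + 1)) := by
    rw [div_div, div_le_div_iff₀ (by positivity) (by positivity)]
    nlinarith [mul_le_mul_of_nonneg_left hX (sq_nonneg X)]
  refine ⟨ρ, ⟨hrρ, hρR⟩, by linarith, fun z hz hzZ ↦ hρZ ⟨z, ⟨hzZ, ?_⟩, by simpa using hz⟩,
    fun z hz k a ha ↦ ?_⟩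
  · exact closedBall_subset_closedBall hρR (sphere_subset_closedBall hz)
  · rw [← mem_sphere_zero_iff_norm.1 hz] at hρM
    refine (hdist.trans (hρM ‖a‖ ?_)).trans (abs_norm_sub_norm_le z a)
    exact Finset.mem_biUnion.2 ⟨k, Finset.mem_univ k, Finset.mem_image_of_mem _ ha⟩

/-- The lemma on the logarithmic derivative, in a pointwise form on a well-chosen circle. -/
lemma exists_norm_iteratedDeriv_le (hφ : ∀ k, Meromorphic (φ k))
    (hφ' : ∀ k z, meromorphicOrderAt (φ k) z ≠ ⊤) {Z : Set ℂ}
    (hZ : ∀ ρ, (Z ∩ closedBall 0 ρ).Finite) (n : ℕ) :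
    ∃ C, 0 ≤ C ∧ ∀ r R, 1 ≤ r → r < R → R ≤ r + 1 → ∃ ρ ∈ Icc r R,
      (∀ z ∈ sphere (0 : ℂ) ρ, z ∉ Z) ∧
      ∀ z ∈ sphere (0 : ℂ) ρ, ∀ k, AnalyticAt ℂ (φ k) z → ∀ i ≤ n,
        ‖iteratedDeriv i (φ k) z‖ ≤
          exp (C * nevanlinnaError (∑ k, characteristic (φ k) ⊤ R) r R) * ‖φ k z‖ := by
  obtain ⟨A, hA, h⟩ := exists_forall_zeroPoleCount_le hφ (32 * (Fintype.card ι + 1))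
  have hA₃₂ : 32 ≤ A := by linarith [(Nat.cast_nonneg (Fintype.card ι) : (0 : ℝ) ≤ _)]
  have : 0 ≤ log (n.factorial : ℝ) := log_natCast_nonneg _
  have hlogA : 0 ≤ log A := log_nonneg (by linarith)
  refine ⟨log n.factorial + 1 + 10 * n * (log A + 1), by positivity, fun r R hr hrR hR ↦ ?_⟩
  set σ := ∑ k, characteristic (φ k) ⊤ R
  set X := A * (1 + σ) * (R / (R - r))
  have hR₁ : 1 ≤ R := hr.trans hrR.le
  have hσ : 0 ≤ σ := sum_characteristic_nonneg hR₁
  have hΔ : 0 < R - r := sub_pos.2 hrR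
  have hAσ : A ≤ A * (1 + σ) := le_mul_of_one_le_right (by linarith) (by linarith)
  have hAX : A * (R / (R - r)) ≤ X := mul_le_mul_of_nonneg_right hAσ (by positivity)
  have hRΔ : R ≤ R / (R - r) := le_div_self (by linarith) hΔ (by linarith)
  have hRX : 32 * R ≤ X := (mul_le_mul hA₃₂ hRΔ (by linarith) (by linarith)).trans hAX
  have hcard : 32 * (Fintype.card ι + 1) / (R - r) ≤ X :=
    calc _ ≤ A * R / (R - r) := div_le_div_of_nonneg_right
          (hA.trans (le_mul_of_one_le_right (by linarith) hR₁)) hΔ.le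
      _ ≤ X := by rwa [mul_div_assoc]
  obtain ⟨ρ, hρ, hρR, hρZ, hρd⟩ := exists_mem_Icc_forall_le_norm_sub hφ hZ hrR hR hcard
    fun k ↦ (h r R hr hrR k).1
  refine ⟨ρ, hρ, hρZ, fun z hz k hzk i hi ↦ ?_⟩
  rw [← mem_sphere_zero_iff_norm.1 hz] at hρR
  calc ‖iteratedDeriv i (φ k) z‖
      ≤ i.factorial * (exp 1 * ‖φ k z‖) * X ^ (10 * i) :=
        norm_iteratedDeriv_le_mul_pow (by linarith) (by linarith) (by linarith) (hφ k) (hφ' k)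
          (h r R hr hrR k).1 (h r R hr hrR k).2 hρR hzk (hρd z hz k) i
    _ ≤ n.factorial * (exp 1 * ‖φ k z‖) * X ^ (10 * n) := by
        gcongr
        linarith
    _ = n.factorial * exp 1 * X ^ (10 * n) * ‖φ k z‖ := by ring
    _ ≤ _ := by
        gcongr
        exact factorial_mul_exp_mul_pow_le (by linarith) hσ hR₁ hrR n

end Family

/-! ### The error term of the second main theorem -/

section WronskianBound

variable {𝕜 : Type*} [NontriviallyNormedField 𝕜] {n : ℕ} {f : Fin n → 𝕜 → 𝕜} {z : 𝕜}

lemma norm_wronskian_le {K : ℝ} {b : Fin n → ℝ}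
    (h : ∀ k, ∀ i < n, ‖iteratedDeriv i (f k) z‖ ≤ K * b k) :
    ‖wronskian f z‖ ≤ n.factorial * (K ^ n * ∏ k, b k) := by
  rw [wronskian, Matrix.det_apply]
  calc _ ≤ ∑ _σ : Equiv.Perm (Fin n), K ^ n * ∏ k, b k := norm_sum_le_of_le _ fun σ _ ↦ ?_
    _ = _ := by simp [Fintype.card_perm]
  have hsign (x : 𝕜) : ‖Equiv.Perm.sign σ • x‖ = ‖x‖ := by
    rcases Int.units_eq_one_or (Equiv.Perm.sign σ) with hu | hu <;> simp [hu]
  have hprod : K ^ n * ∏ k, b k = ∏ k, K * b (σ k) := by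
    rw [Finset.prod_mul_distrib, Equiv.prod_comp σ b, Fin.prod_const]
  rw [hsign, norm_prod, hprod]
  exact Finset.prod_le_prod (fun _ _ ↦ norm_nonneg _) fun k _ ↦ h (σ k) k k.2

lemma norm_wronskian_le_of_norm_iteratedDeriv_div_le [CompleteSpace 𝕜] {h : 𝕜 → 𝕜}
    (hf : ∀ k, AnalyticAt 𝕜 (f k) z) (hh : AnalyticAt 𝕜 h z) (hz : h z ≠ 0) {K : ℝ}
    (hK : ∀ k, ∀ i < n, ‖iteratedDeriv i (f k / h) z‖ ≤ K * ‖(f k / h) z‖) :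
    ‖wronskian f z‖ ≤ n.factorial * K ^ n * ∏ k, ‖f k z‖ := by
  have hfactor : wronskian f z = h z ^ n * wronskian (fun k ↦ f k / h) z := by
    rw [← wronskian_mul_left hh fun k ↦ (hf k).div hh hz]
    refine wronskian_congr fun k ↦ ?_
    filter_upwards [hh.continuousAt.eventually_ne hz] with w hw
    simp [mul_div_cancel₀ _ hw]
  have hprod : ‖h z‖ ^ n * ∏ k, ‖(f k / h) z‖ = ∏ k, ‖f k z‖ := by
    simp only [Pi.div_apply, norm_div, Finset.prod_div_distrib, Fin.prod_const]
    exact mul_div_cancel₀ _ (pow_ne_zero n (norm_ne_zero_iff.2 hz))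
  calc ‖wronskian f z‖ ≤ ‖h z‖ ^ n * (n.factorial * (K ^ n * ∏ k, ‖(f k / h) z‖)) := by
        rw [hfactor, norm_mul, norm_pow]
        gcongr
        exact norm_wronskian_le hK
    _ = n.factorial * K ^ n * (‖h z‖ ^ n * ∏ k, ‖(f k / h) z‖) := by ring
    _ = _ := by rw [hprod]

end WronskianBound

/-- At `z` the Wronskian may be computed from the coordinates other than one of maximal modulus. -/
lemma norm_wronskian_mul_norm_swap_le {n : ℕ} {F : Fin (n + 1) → ℂ → ℂ}
    (hF : ∀ k, Differentiable ℂ (F k)) (hsum : ∑ k, F k = 0) {q : Fin (n + 1)} {z : ℂ}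
    (hq : F q z ≠ 0) {K : ℝ}
    (hK : ∀ k, ∀ i < n, ‖iteratedDeriv i (F k / F q) z‖ ≤ K * ‖(F k / F q) z‖) :
    ‖wronskian (q.removeNth F) z‖ * ‖Function.swap F z‖ ≤
      n.factorial * K ^ n * ∏ k, ‖F k z‖ := by
  obtain ⟨p, hp⟩ := Finite.exists_max fun k ↦ ‖F k z‖
  have hswap : ‖Function.swap F z‖ ≤ ‖F p z‖ := (pi_norm_le_iff_of_nonempty _).2 hp
  have hnorm : ‖wronskian (q.removeNth F) z‖ = ‖wronskian (p.removeNth F) z‖ := by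
    rcases wronskian_removeNth_eq_or_eq_neg hF hsum p q with h | h <;> simp [h]
  have hWp : ‖wronskian (p.removeNth F) z‖ ≤
      n.factorial * K ^ n * ∏ k, ‖F (p.succAbove k) z‖ :=
    norm_wronskian_le_of_norm_iteratedDeriv_div_le (fun k ↦ (hF _).analyticAt z)
      ((hF q).analyticAt z) hq fun k ↦ hK (p.succAbove k)
  calc _ ≤ n.factorial * K ^ n * (∏ k, ‖F (p.succAbove k) z‖) * ‖F p z‖ := by
        rw [hnorm]
        exact mul_le_mul hWp hswap (norm_nonneg _) ((norm_nonneg _).trans hWp)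
    _ = _ := by
        rw [Fin.prod_univ_succAbove _ p]
        ring

lemma meromorphicOrderAt_div_ne_top {f g : ℂ → ℂ} (hf : Differentiable ℂ f)
    (hg : Differentiable ℂ g) (hf₀ : f ≠ 0) (hg₀ : g ≠ 0) (z : ℂ) :
    meromorphicOrderAt (f / g) z ≠ ⊤ := by
  rw [div_eq_mul_inv, meromorphicOrderAt_mul (meromorphic_of_differentiable hf z)
    (meromorphic_of_differentiable hg z).inv, meromorphicOrderAt_inv]
  simp [meromorphicOrderAt_ne_top_of_differentiable hf hf₀ z,
    meromorphicOrderAt_ne_top_of_differentiable hg hg₀ z]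

lemma exists_curveOrder_le_logCounting_add_nevanlinnaError {n : ℕ} {F : Fin (n + 1) → ℂ → ℂ}
    (hF : ∀ k, Differentiable ℂ (F k)) (hF₀ : ∀ k, F k ≠ 0) (hsum : ∑ k, F k = 0)
    {q : Fin (n + 1)} (hW : wronskian (q.removeNth F) ≠ 0)
    {D : Function.locallyFinsuppWithin (univ : Set ℂ) ℤ}
    (hD : ∀ z, ∑ k, min (divisor (F k) univ z - divisor (Function.swap F) univ z) (n - 1 : ℕ)
      ≤ D z) :
    ∃ C, 0 ≤ C ∧ ∀ r R, 1 ≤ r → r < R → R ≤ r + 1 → ∃ ρ ∈ Icc r R,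
      (∀ z ∈ sphere (0 : ℂ) ρ, ∀ k, F k z ≠ 0) ∧ curveOrder F ρ ≤ logCounting D ρ +
        C * nevanlinnaError (∑ k, characteristic (F k / F q) ⊤ R) r R := by
  set W := wronskian (q.removeNth F)
  set Z : Set ℂ := {z | W z = 0} ∪ ⋃ k, {z | F k z = 0}
  have hZ : ∀ ρ, (Z ∩ closedBall 0 ρ).Finite := fun ρ ↦ by
    rw [union_inter_distrib_right, iUnion_inter]
    exact (finite_zeros_inter_closedBall (differentiable_wronskian fun k ↦ hF _) hW ρ).union
      (finite_iUnion fun k ↦ finite_zeros_inter_closedBall (hF k) (hF₀ k) ρ)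
  obtain ⟨C, hC, hderiv⟩ := exists_norm_iteratedDeriv_le
    (fun k ↦ (meromorphic_of_differentiable (hF k)).div (meromorphic_of_differentiable (hF q)))
    (fun k ↦ meromorphicOrderAt_div_ne_top (hF k) (hF q) (hF₀ k) (hF₀ q)) hZ n
  obtain ⟨c, hc⟩ := exists_curveOrder_le_logCounting hF hF₀ hsum hW hD
  have : 0 ≤ log (n.factorial : ℝ) := log_natCast_nonneg _
  refine ⟨log n.factorial + n * C + |c|, by positivity, fun r R hr hrR hR ↦ ?_⟩
  obtain ⟨ρ, hρ, hρZ, hρder⟩ := hderiv r R hr hrR hR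
  have hFρ : ∀ z ∈ sphere (0 : ℂ) ρ, ∀ k, F k z ≠ 0 := fun z hz k h ↦
    hρZ z hz (Or.inr (mem_iUnion.2 ⟨k, h⟩))
  refine ⟨ρ, hρ, hFρ, ?_⟩
  set e := nevanlinnaError (∑ k, characteristic (F k / F q) ⊤ R) r R
  have he : 1 ≤ e := one_le_nevanlinnaError _ r R
  have horder := hc ρ (log n.factorial + n * (C * e)) (hr.trans hρ.1) hFρ
    (fun z hz h ↦ hρZ z hz (Or.inl h)) fun z hz ↦ by
      rw [exp_add, exp_log (by positivity), exp_nat_mul]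
      exact norm_wronskian_mul_norm_swap_le hF hsum (hFρ z hz q) fun k i hi ↦
        hρder z hz k (((hF k).analyticAt z).div ((hF q).analyticAt z) (hFρ z hz q)) i hi.le
  have hconst : log n.factorial + c ≤ (log n.factorial + |c|) * e :=
    (by gcongr; exact le_abs_self c : _ ≤ log n.factorial + |c|).trans
      (le_mul_of_one_le_right (by positivity) he)
  linarith

/-! ### Dependent families of powers -/

lemma exists_logCounting_sum_sub_le_curveOrder {ι : Type*} [Fintype ι] {F : ι → ℂ → ℂ}
    (hF : ∀ k, Differentiable ℂ (F k)) :
    ∃ c, ∀ r, 1 ≤ r → (∀ z ∈ sphere (0 : ℂ) r, ∀ k, F k z ≠ 0) →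
      logCounting (∑ k, (divisor (F k) univ - divisor (Function.swap F) univ)) r ≤
        Fintype.card ι * curveOrder F r + c := by
  choose c hc using exists_logCounting_sub_le_curveOrder hF
  refine ⟨∑ k, c k, fun r hr hFr ↦ ?_⟩
  calc _ = ∑ k, logCounting (divisor (F k) univ - divisor (Function.swap F) univ) r := by simp
    _ ≤ ∑ k, (curveOrder F r + c k) :=
        Finset.sum_le_sum fun k _ ↦ hc k r hr fun z hz ↦ hFr z hz k
    _ = _ := by rw [Finset.sum_add_distrib, Finset.sum_const, nsmul_eq_mul, Finset.card_univ]

/-- Every zero of `F k ^ d` has multiplicity at least `d`, but counts with multiplicity at most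
`m` after truncation. -/
lemma sum_min_divisor_pow_le {ι : Type*} [Fintype ι] [Nonempty ι] {F : ι → ℂ → ℂ}
    (hF : ∀ k, Differentiable ℂ (F k)) (hF₀ : ∀ k, F k ≠ 0) (d m : ℕ) (z : ℂ) :
    ∑ k, min (divisor ((F ^ d) k) univ z - divisor (Function.swap (F ^ d)) univ z) m ≤
      (m • ∑ k, (divisor (F k) univ - divisor (Function.swap F) univ)) z := by
  simp only [Function.locallyFinsuppWithin.coe_nsmul, Function.locallyFinsuppWithin.coe_sum,
    Pi.smul_apply, Finset.sum_apply, Finset.smul_sum]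
  refine Finset.sum_le_sum fun k _ ↦ ?_
  have hle : 0 ≤ (divisor (F k) univ - divisor (Function.swap F) univ) z :=
    sub_nonneg.2 (divisor_swap_le hF (hF₀ k) z)
  rw [divisor_swap_pow hF hF₀, Pi.pow_apply, divisor_pow_of_differentiable (hF k)]
  simp only [Function.locallyFinsuppWithin.coe_nsmul, Function.locallyFinsuppWithin.coe_sub,
    Pi.smul_apply, Pi.sub_apply, ← smul_sub] at hle ⊢
  rcases hle.eq_or_lt with h | h
  · simp [← h]
  · exact (min_le_right _ _).trans (by simpa using le_mul_of_one_le_right (by positivity) h)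

lemma exists_curveOrder_le_mul_nevanlinnaError {n d : ℕ} (hd : (n - 1) * (n + 1) < d)
    {F : Fin (n + 1) → ℂ → ℂ} (hF : ∀ k, Differentiable ℂ (F k)) (hF₀ : ∀ k, F k ≠ 0)
    (hsum : ∑ k, F k ^ d = 0) {q : Fin (n + 1)} (hW : wronskian (q.removeNth (F ^ d)) ≠ 0) :
    ∃ C, 0 ≤ C ∧ ∀ r R, 1 ≤ r → r < R → R ≤ r + 1 → ∃ ρ ∈ Icc r R,
      (∀ z ∈ sphere (0 : ℂ) ρ, ∀ k, F k z ≠ 0) ∧ curveOrder F ρ ≤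
        C * nevanlinnaError (∑ k, characteristic ((F ^ d) k / (F ^ d) q) ⊤ R) r R := by
  have hd₀ : d ≠ 0 := by omega
  obtain ⟨C, hC, hcurve⟩ := exists_curveOrder_le_logCounting_add_nevanlinnaError (F := F ^ d)
    (fun k ↦ (hF k).pow d) (fun k ↦ pow_ne_zero d (hF₀ k)) hsum hW
    (sum_min_divisor_pow_le hF hF₀ d (n - 1))
  obtain ⟨c, hc⟩ := exists_logCounting_sum_sub_le_curveOrder hF
  refine ⟨C + (n - 1 : ℕ) * |c|, by positivity, fun r R hr hrR hR ↦ ?_⟩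
  obtain ⟨ρ, hρ, hFρ, hle⟩ := hcurve r R hr hrR hR
  replace hFρ : ∀ z ∈ sphere (0 : ℂ) ρ, ∀ k, F k z ≠ 0 := fun z hz k h ↦
    hFρ z hz k (by simp [h, hd₀])
  refine ⟨ρ, hρ, hFρ, ?_⟩
  set e := nevanlinnaError (∑ k, characteristic ((F ^ d) k / (F ^ d) q) ⊤ R) r R
  have he : 1 ≤ e := one_le_nevanlinnaError _ r R
  have hcount := hc ρ (hr.trans hρ.1) hFρ
  have hgap : ((n - 1 : ℕ) * (n + 1 : ℝ)) + 1 ≤ d := mod_cast hd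
  rw [curveOrder_pow hF hF₀, map_nsmul, Pi.smul_apply, nsmul_eq_mul] at hle
  rw [Fintype.card_fin] at hcount
  push_cast at hcount
  have hmul : (d - (n - 1 : ℕ) * (n + 1 : ℝ)) * curveOrder F ρ ≤
      (C + (n - 1 : ℕ) * |c|) * e := by
    have hconst : c ≤ |c| * e :=
      (le_abs_self c).trans (le_mul_of_one_le_right (abs_nonneg c) he)
    have := mul_le_mul_of_nonneg_left (hcount.trans (add_le_add_right hconst _))
      (Nat.cast_nonneg (α := ℝ) (n - 1))
    linarith
  rcases le_total (curveOrder F ρ) 0 with h | h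
  · exact h.trans (by positivity)
  · exact (le_mul_of_one_le_left h (by linarith)).trans hmul

lemma exists_sum_characteristic_div_le_mul_nevanlinnaError {n d : ℕ}
    (hd : (n - 1) * (n + 1) < d) {F : Fin (n + 1) → ℂ → ℂ} (hF : ∀ k, Differentiable ℂ (F k))
    (hF₀ : ∀ k, F k ≠ 0) (hsum : ∑ k, F k ^ d = 0) {q : Fin (n + 1)}
    (hW : wronskian (q.removeNth (F ^ d)) ≠ 0) :
    ∃ C, 0 ≤ C ∧ ∀ r R, 1 ≤ r → r < R → R ≤ r + 1 →
      ∑ k, characteristic ((F ^ d) k / (F ^ d) q) ⊤ r ≤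
        C * nevanlinnaError (∑ k, characteristic ((F ^ d) k / (F ^ d) q) ⊤ R) r R := by
  have hFd : ∀ k, Differentiable ℂ ((F ^ d) k) := fun k ↦ (hF k).pow d
  obtain ⟨C, hC, hcurve⟩ := exists_curveOrder_le_mul_nevanlinnaError hd hF hF₀ hsum hW
  choose c hc using fun k ↦ exists_characteristic_div_le_curveOrder hFd
    (pow_ne_zero d (hF₀ k)) (pow_ne_zero d (hF₀ q))
  refine ⟨∑ k, (d * C + |c k|), Finset.sum_nonneg fun k _ ↦ by positivity, fun r R hr hrR hR ↦ ?_⟩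
  obtain ⟨ρ, hρ, hFρ, hle⟩ := hcurve r R hr hrR hR
  set e := nevanlinnaError (∑ k, characteristic ((F ^ d) k / (F ^ d) q) ⊤ R) r R
  have he : 1 ≤ e := one_le_nevanlinnaError _ r R
  rw [Finset.sum_mul]
  refine Finset.sum_le_sum fun k _ ↦ ?_
  have hmer : Meromorphic ((F ^ d) k / (F ^ d) q) :=
    (meromorphic_of_differentiable (hFd k)).div (meromorphic_of_differentiable (hFd q))
  calc characteristic ((F ^ d) k / (F ^ d) q) ⊤ r
      ≤ characteristic ((F ^ d) k / (F ^ d) q) ⊤ ρ := characteristic_monotoneOn hmer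
        (zero_lt_one.trans_le hr) (zero_lt_one.trans_le (hr.trans hρ.1)) hρ.1
    _ ≤ curveOrder (F ^ d) ρ + c k :=
        hc k ρ (hr.trans hρ.1) fun z hz ↦ pow_ne_zero d (hFρ z hz q)
    _ ≤ d * (C * e) + |c k| * e := by
        rw [curveOrder_pow hF hF₀]
        gcongr
        exact (le_abs_self _).trans (le_mul_of_one_le_right (abs_nonneg _) he)
    _ = (d * C + |c k|) * e := by ring

lemma isBigO_characteristic_div_log {n d : ℕ} (hd : (n - 1) * (n + 1) < d)
    {F : Fin (n + 1) → ℂ → ℂ} (hF : ∀ k, Differentiable ℂ (F k)) (hF₀ : ∀ k, F k ≠ 0)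
    (hsum : ∑ k, F k ^ d = 0) {q : Fin (n + 1)} (hW : wronskian (q.removeNth (F ^ d)) ≠ 0)
    (k : Fin (n + 1)) :
    characteristic (F k / F q) ⊤ =O[atTop] log := by
  have hmer : Meromorphic (F k / F q) :=
    (meromorphic_of_differentiable (hF k)).div (meromorphic_of_differentiable (hF q))
  obtain ⟨C, hC, hle⟩ := exists_sum_characteristic_div_le_mul_nevanlinnaError hd hF hF₀ hsum hW
  have hmono : MonotoneOn (fun r ↦ ∑ k, characteristic ((F ^ d) k / (F ^ d) q) ⊤ r) (Ioi 0) :=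
    fun r hr R hR hrR ↦ Finset.sum_le_sum fun k _ ↦ characteristic_monotoneOn
      ((meromorphic_of_differentiable ((hF k).pow d)).div
        (meromorphic_of_differentiable ((hF q).pow d))) hr hR hrR
  refine .trans (.of_bound 1 ?_)
    (isBigO_log_of_le_nevanlinnaError hmono (fun _ ↦ sum_characteristic_nonneg) hC hle)
  filter_upwards [eventually_ge_atTop 1] with r hr
  rw [one_mul, norm_of_nonneg (characteristic_nonneg hr),
    norm_of_nonneg (sum_characteristic_nonneg hr)]
  calc characteristic (F k / F q) ⊤ r ≤ d * characteristic (F k / F q) ⊤ r :=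
        le_mul_of_one_le_left (characteristic_nonneg hr) (mod_cast Nat.one_le_of_lt hd)
    _ = characteristic ((F ^ d) k / (F ^ d) q) ⊤ r := by
        rw [Pi.pow_apply, Pi.pow_apply, ← div_pow, characteristic_pow_top hmer, Pi.smul_apply,
          nsmul_eq_mul]
    _ ≤ _ := characteristic_le_sum_characteristic (φ := fun k ↦ (F ^ d) k / (F ^ d) q) hr k

lemma one_le_divisor_div_sub {f g : ℂ → ℂ} (hf : Differentiable ℂ f) (hg : Differentiable ℂ g)
    {c p : ℂ} (hne : f ≠ c • g) (hgp : g p ≠ 0) (hfp : f p = c * g p) :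
    1 ≤ divisor (fun z ↦ (f / g) z - c) univ p := by
  have hmer : Meromorphic fun z ↦ (f / g) z - c :=
    ((meromorphic_of_differentiable hf).div (meromorphic_of_differentiable hg)).sub (.const c)
  have han : AnalyticAt ℂ (fun z ↦ (f / g) z - c) p :=
    ((hf.analyticAt p).div (hg.analyticAt p) hgp).sub analyticAt_const
  have hzero : (f / g) p - c = 0 := by simp [hfp, hgp]
  have htop : analyticOrderAt (fun z ↦ (f / g) z - c) p ≠ ⊤ := fun h ↦ by
    refine analyticOrderAt_ne_top_of_differentiable (hf.sub (hg.const_smul c))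
      (sub_ne_zero.2 hne) p (analyticOrderAt_eq_top.2 ?_)
    filter_upwards [analyticOrderAt_eq_top.1 h, hg.continuous.continuousAt.eventually_ne hgp]
      with z hz hgz
    simpa [sub_eq_zero, div_eq_iff hgz] using hz
  rw [divisor_univ_of_analyticAt hmer han]
  have hpos : analyticOrderNatAt (fun z ↦ (f / g) z - c) p ≠ 0 :=
    mt ENat.toNat_eq_zero.1 (not_or_intro (han.analyticOrderAt_ne_zero.2 hzero) htop)
  omega

lemma exists_eq_smul_of_periodic {n d : ℕ} (hd : (n - 1) * (n + 1) < d)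
    {F : Fin (n + 1) → ℂ → ℂ} (hF : ∀ k, Differentiable ℂ (F k)) (hF₀ : ∀ k, F k ≠ 0)
    (hsum : ∑ k, F k ^ d = 0) {q : Fin (n + 1)} (hW : wronskian (q.removeNth (F ^ d)) ≠ 0)
    {w : ℂ} (hw : w ≠ 0) (hper : ∀ k, Function.Periodic (F k) w) (k : Fin (n + 1)) :
    ∃ c : ℂ, F k = c • F q := by
  obtain ⟨z₀, hz₀⟩ := Function.ne_iff.1 (hF₀ q)
  by_contra! hne
  refine not_isBigO_characteristic_log (c := F k z₀ / F q z₀) (z₀ := z₀)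
    ((meromorphic_of_differentiable (hF k)).div (meromorphic_of_differentiable (hF q))) hw
    (fun m ↦ ?_) (isBigO_characteristic_div_log hd hF hF₀ hsum hW k)
  have hval : ∀ j, F j (z₀ + m * w) = F j z₀ := fun j ↦ (hper j).nat_mul m z₀
  refine one_le_divisor_div_sub (hF k) (hF q) (hne _) ((hval q).trans_ne hz₀) ?_
  rw [hval, hval, div_mul_cancel₀ _ hz₀]

lemma eq_of_comp_exp_eq {X : Type*} [TopologicalSpace X] [T2Space X] {f g : ℂ → X}
    (hf : Continuous f) (hg : Continuous g) (h : f ∘ Complex.exp = g ∘ Complex.exp) : f = g := by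
  refine hf.ext_on (dense_compl_singleton (0 : ℂ)) hg fun z hz ↦ ?_
  rw [← Complex.exp_log hz]
  exact congrFun h _

lemma linearIndependent_comp_exp {ι : Type*} {f : ι → ℂ → ℂ} (h : LinearIndependent ℂ f)
    (hf : ∀ k, Continuous (f k)) : LinearIndependent ℂ fun k ↦ f k ∘ Complex.exp := by
  refine linearIndependent_iff'.2 fun s c hc ↦ linearIndependent_iff'.1 h s c ?_
  have hcont : Continuous (∑ k ∈ s, c k • f k) := by
    simpa [Finset.sum_fn] using continuous_finsetSum s fun k _ ↦ (hf k).const_smul (c k)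
  refine eq_of_comp_exp_eq hcont continuous_zero (Eq.trans ?_ hc)
  ext z
  simp

/-- The substitution `z = exp w` makes the functions periodic while keeping them entire. -/
lemma exists_eq_smul_of_linearIndependent {n d : ℕ} (hd : (n - 1) * (n + 1) < d)
    {F : Fin (n + 1) → ℂ → ℂ} (hF : ∀ k, Differentiable ℂ (F k)) (hF₀ : ∀ k, F k ≠ 0)
    (hsum : ∑ k, F k ^ d = 0) {q : Fin (n + 1)}
    (h : LinearIndependent ℂ (q.removeNth (F ^ d))) (k : Fin (n + 1)) :
    ∃ c : ℂ, F k = c • F q := by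
  have hFd : ∀ k, Differentiable ℂ ((F ^ d) k) := fun k ↦ (hF k).pow d
  have hW := wronskian_ne_zero_of_linearIndependent
    (fun k ↦ (hFd (q.succAbove k)).comp Complex.differentiable_exp)
    (linearIndependent_comp_exp h fun k ↦ (hFd (q.succAbove k)).continuous)
  obtain ⟨c, hc⟩ := exists_eq_smul_of_periodic (F := fun k ↦ F k ∘ Complex.exp) hd
    (fun k ↦ (hF k).comp Complex.differentiable_exp)
    (fun k hk ↦ hF₀ k (eq_of_comp_exp_eq (hF k).continuous continuous_zero hk))
    (by ext z; simpa using congrFun hsum (Complex.exp z)) hW Complex.two_pi_I_ne_zero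
    (fun k ↦ Complex.exp_periodic.comp (F k)) k
  exact ⟨c, eq_of_comp_exp_eq (hF k).continuous ((hF q).const_smul c).continuous hc⟩

lemma exists_eq_smul_of_linearIndepOn_erase {ι : Type*} [DecidableEq ι] {K : Finset ι} {d : ℕ}
    (hd : K.card * (K.card - 2) < d) {a : ι → ℂ} (ha : ∀ k ∈ K, a k ≠ 0) {g : ι → ℂ → ℂ}
    (hg : ∀ k ∈ K, Differentiable ℂ (g k)) (hg₀ : ∀ k ∈ K, g k ≠ 0)
    (hsum : ∑ k ∈ K, a k • g k ^ d = 0) {q : ι} (hq : q ∈ K)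
    (hind : LinearIndepOn ℂ (fun k ↦ g k ^ d) (K.erase q : Set ι)) {k : ι} (hk : k ∈ K) :
    ∃ c : ℂ, g k = c • g q := by
  obtain ⟨n, hn⟩ := Nat.exists_eq_succ_of_ne_zero (Finset.card_ne_zero_of_mem hq)
  choose b hb using fun k ↦ IsAlgClosed.exists_pow_nat_eq (a k) (Nat.zero_lt_of_lt hd)
  have hb₀ : ∀ k ∈ K, b k ≠ 0 := fun k hk h ↦
    ha k hk (by rw [← hb k, h, zero_pow (Nat.ne_zero_of_lt hd)])
  let e : Fin (n + 1) ≃ K := (K.equivFinOfCardEq hn).symm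
  obtain ⟨p, hp⟩ := e.surjective ⟨q, hq⟩
  obtain ⟨i, hi⟩ := e.surjective ⟨k, hk⟩
  have hpow : ∀ k, (b k • g k) ^ d = a k • g k ^ d := fun k ↦ by rw [smul_pow, hb]
  have hindF : LinearIndependent ℂ (p.removeNth fun k ↦ (b (e k) • g (e k)) ^ d) := by
    have hmem : ∀ j, (e (p.succAbove j) : ι) ∈ K.erase q := fun j ↦ Finset.mem_erase.2
      ⟨fun hj ↦ p.succAbove_ne j (e.injective (hp ▸ Subtype.ext hj)), (e _).2⟩
    have hinj : Function.Injective fun j ↦ (⟨_, hmem j⟩ : (K.erase q : Set ι)) := fun i j hij ↦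
      p.succAbove_right_injective (e.injective (Subtype.ext (congrArg Subtype.val hij :)))
    convert (hind.linearIndependent.comp _ hinj).units_smul
      fun j ↦ Units.mk0 (a (e (p.succAbove j))) (ha _ (e _).2)
    exact funext fun j ↦ hpow _
  obtain ⟨c, hc⟩ := exists_eq_smul_of_linearIndependent (F := fun k ↦ b (e k) • g (e k))
    (by rwa [hn, mul_comm] at hd) (fun k ↦ (hg _ (e k).2).const_smul _)
    (fun k ↦ smul_ne_zero (hb₀ _ (e k).2) (hg₀ _ (e k).2))
    (by
      simp only [hpow]
      rwa [e.sum_comp fun k : K ↦ a k • g k ^ d, Finset.sum_coe_sort K fun k ↦ a k • g k ^ d])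
    hindF i
  refine ⟨(b k)⁻¹ * (c * b q), ?_⟩
  simp only [hp, hi] at hc
  rw [mul_smul, mul_smul, ← hc, inv_smul_smul₀ (hb₀ k hk)]

/-- A minimal dependent subfamily is a circuit. -/
lemma exists_subset_sum_smul_eq_zero {𝕜 V ι : Type*} [Field 𝕜] [AddCommGroup V] [Module 𝕜 V]
    [DecidableEq ι] {v : ι → V} {K : Finset ι} (h : ¬ LinearIndepOn 𝕜 v (K : Set ι)) :
    ∃ S ⊆ K, S.Nonempty ∧ (∃ a : ι → 𝕜, (∀ k ∈ S, a k ≠ 0) ∧ ∑ k ∈ S, a k • v k = 0) ∧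
      ∀ q ∈ S, LinearIndepOn 𝕜 v (S.erase q : Set ι) := by
  obtain ⟨S, hSK, hS⟩ := exists_minimal_le_of_wellFoundedLT
    (fun S : Finset ι ↦ ¬ LinearIndepOn 𝕜 v (S : Set ι)) K h
  have herase : ∀ q ∈ S, LinearIndepOn 𝕜 v (S.erase q : Set ι) := fun q hq ↦
    not_not.1 (hS.not_prop_of_lt (Finset.erase_ssubset hq))
  obtain ⟨a, ha, j, hj, haj⟩ : ∃ a : ι → 𝕜, ∑ k ∈ S, a k • v k = 0 ∧ ∃ j ∈ S, a j ≠ 0 := by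
    simpa [linearIndepOn_finset_iff] using hS.prop
  refine ⟨S, hSK, ⟨j, hj⟩, ⟨a, fun q hq haq ↦ ?_, ha⟩, herase⟩
  have hsum : ∑ k ∈ S.erase q, a k • v k = 0 := by
    rwa [Finset.sum_erase _ (by rw [haq, zero_smul])]
  exact haj (linearIndepOn_finset_iff.1 (herase q hq) a hsum j
    (Finset.mem_erase.2 ⟨fun hjq ↦ haj (hjq ▸ haq), hj⟩))

/-- key Claim in the proof of Theorem B: a nontrivial vanishing linear
combination `Σ_{k∈K} a_k g_k^d ≡ 0` of `d`-th powers of entire functions, none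
identically zero, with `|K| = γ ≥ 2` and `d > γ(γ-2)`, forces two of the functions to be
proportional. -/
theorem stmt_10 {ι : Type*} (K : Finset ι) (γ d : ℕ) (hK : K.card = γ) (hγ : 2 ≤ γ)
    (hd : γ * (γ - 2) < d)
    (a : ι → ℂ) (ha : ∀ k ∈ K, a k ≠ 0)
    (g : ι → ℂ → ℂ) (hg : ∀ k ∈ K, Differentiable ℂ (g k)) (hg0 : ∀ k ∈ K, g k ≠ 0)
    (hrel : ∀ z : ℂ, ∑ k ∈ K, a k * (g k z) ^ d = 0) :
    ∃ i ∈ K, ∃ j ∈ K, i ≠ j ∧ ∃ c : ℂ, c ≠ 0 ∧ ∀ z, g i z = c * g j z := by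
  classical
  obtain ⟨x, hx⟩ : K.Nonempty := Finset.card_pos.1 (by omega)
  have hdep : ¬ LinearIndepOn ℂ (fun k ↦ g k ^ d) (K : Set ι) := fun h ↦
    ha x hx (linearIndepOn_finset_iff.1 h a (by ext z; simpa using hrel z) x hx)
  obtain ⟨S, hSK, ⟨q, hq⟩, ⟨a', ha', hsum⟩, hind⟩ := exists_subset_sum_smul_eq_zero hdep
  obtain ⟨i, hi, hiq⟩ : ∃ i ∈ S, i ≠ q := by
    by_contra! h
    rw [Finset.eq_singleton_iff_unique_mem.2 ⟨hq, h⟩, Finset.sum_singleton] at hsum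
    exact smul_ne_zero (ha' q hq) (pow_ne_zero d (hg0 q (hSK hq))) hsum
  obtain ⟨c, hc⟩ := exists_eq_smul_of_linearIndepOn_erase
    (lt_of_le_of_lt (by rw [← hK]; gcongr) hd) ha' (fun k hk ↦ hg k (hSK hk))
    (fun k hk ↦ hg0 k (hSK hk)) hsum hq (hind q hq) hi
  refine ⟨i, hSK hi, q, hSK hq, hiq, c, ?_, congrFun hc⟩
  rintro rfl
  exact hg0 i (hSK hi) (by rw [hc, zero_smul])
end

section
/- (Classical Borel theorem) Let g_1, …, g_m be nowhere-vanishing entire functions on ℂ satisfying g_1 + g_2 + ⋯ + g_m = 0 identically, with m ≥ 3. Then there exist distinct indices i ≠ j such that g_i/g_j is a nonzero constant. -/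
/-!
If a zero-free entire function `g` is a linear combination of linearly independent zero-free entire
functions, dividing by `g` gives `f₁ + ⋯ + fₙ = 1` with `fᵢ` zero-free, entire and linearly
independent; it suffices to show that every `fᵢ` is constant. Let `T` be the sum of the Nevanlinna
proximity functions of the `fᵢ`. The entire functions whose growth is polynomial in
`R + T(R) + 1 / (R - r)` form an algebra stable under differentiation (Cauchy's estimate) which
contains the logarithmic derivatives `fᵢ' / fᵢ` (differentiate the Herglotz–Riesz formula for
`log |fᵢ|`, in which no zeros intervene). Eliminating the `fᵢ` one after the other from the relation
by first order differential operators over this algebra expresses each `fᵢ` as a quotient of two of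
its elements, so that `T(r) = O(log (R + T(R) + 1 / (R - r)))` for all `r < R`. This forces
`T(r) = o(r)`, hence the logarithmic derivatives vanish.
-/

section DifferentialAlgebra

variable {C R ι : Type*} [CommRing C] [CommRing R] [Algebra C R]

theorem linearIndepOn_comp_of_ker_le_span {K V W : Type*} [DivisionRing K] [AddCommGroup V]
    [AddCommGroup W] [Module K V] [Module K W] {E : V →ₗ[K] W} {v : ι → V} {s : Set ι} {n : ι}
    (hn : n ∉ s) (hv : LinearIndepOn K v (insert n s)) (hE : LinearMap.ker E ≤ K ∙ v n) :
    LinearIndepOn K (E ∘ v) s := by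
  refine LinearIndependent.map (hv.mono (Set.subset_insert n s)) (f := E) ?_
  rw [← Set.image_eq_range]
  exact ((Submodule.disjoint_span_singleton' (hv.ne_zero (Set.mem_insert n s))).2
    (hv.notMem_span_of_insert hn)).mono_right hE

/-- The first order operator `u ↦ a * D u - p * u`. It annihilates `a * x` when
`D (a * x) = p * x`, and is then used to eliminate `a * x` from a linear relation. -/
def firstOrderOperator (D : Derivation C R R) (a p : R) : R →ₗ[C] R :=
  LinearMap.mulLeft C a ∘ₗ D.toLinearMap - LinearMap.mulLeft C p

theorem firstOrderOperator_apply (D : Derivation C R R) (a p u : R) :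
    firstOrderOperator D a p u = a * D u - p * u := rfl

theorem firstOrderOperator_mul {D : Derivation C R R} {a p b l x : R} (hx : D x = l * x) :
    firstOrderOperator D a p (b * x) = (a * (D b + b * l) - p * b) * x := by
  simp only [firstOrderOperator_apply, Derivation.leibniz, smul_eq_mul, hx]
  ring

theorem ker_firstOrderOperator_le_span {D : Derivation C R R}
    (hD : ∀ u w : R, w ≠ 0 → w * D u = D w * u → ∃ c : C, u = c • w) {a p x : R}
    (hax : a * x ≠ 0) (hD_ax : D (a * x) = p * x) :
    LinearMap.ker (firstOrderOperator D a p) ≤ C ∙ (a * x) := by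
  intro u hu
  rw [LinearMap.mem_ker, firstOrderOperator_apply, sub_eq_zero] at hu
  obtain ⟨c, rfl⟩ := hD u _ hax (by rw [hD_ax]; linear_combination x * hu)
  exact Submodule.smul_mem _ c (Submodule.mem_span_singleton_self _)

variable [IsDomain R]

/-- The elements of a domain `R` that are fractions of elements of a subalgebra `S`, that is,
`R ∩ Frac S`. -/
def quotientClosure (S : Subalgebra C R) : Subalgebra C R where
  carrier := {u | ∃ a ∈ S, a ≠ 0 ∧ a * u ∈ S}
  mul_mem' := by
    rintro u v ⟨a, ha, ha0, hau⟩ ⟨b, hb, hb0, hbv⟩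
    refine ⟨a * b, S.mul_mem ha hb, mul_ne_zero ha0 hb0, ?_⟩
    rw [mul_mul_mul_comm]
    exact S.mul_mem hau hbv
  add_mem' := by
    rintro u v ⟨a, ha, ha0, hau⟩ ⟨b, hb, hb0, hbv⟩
    refine ⟨a * b, S.mul_mem ha hb, mul_ne_zero ha0 hb0, ?_⟩
    rw [show a * b * (u + v) = b * (a * u) + a * (b * v) by ring]
    exact S.add_mem (S.mul_mem hb hau) (S.mul_mem ha hbv)
  algebraMap_mem' c := ⟨1, S.one_mem, one_ne_zero, by simp⟩

theorem le_quotientClosure (S : Subalgebra C R) : S ≤ quotientClosure S :=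
  fun u hu ↦ ⟨1, S.one_mem, one_ne_zero, by rwa [one_mul]⟩

theorem mem_quotientClosure_of_mul_mem {S : Subalgebra C R} {a u : R} (ha : a ∈ S) (ha0 : a ≠ 0)
    (hau : a * u ∈ quotientClosure S) : u ∈ quotientClosure S := by
  obtain ⟨b, hb, hb0, hbau⟩ := hau
  exact ⟨b * a, S.mul_mem hb ha, mul_ne_zero hb0 ha0, by rwa [mul_assoc]⟩

theorem mem_quotientClosure_of_sum_mem {K : Type*} [Field K] [Algebra K R] (D : Derivation K R R)
    (hD : ∀ u w : R, w ≠ 0 → w * D u = D w * u → ∃ c : K, u = c • w)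
    {S : Subalgebra K R} (hS : ∀ u ∈ S, D u ∈ S) {g : ι → R} {s : Finset ι}
    (hg : ∀ i ∈ s, ∃ l ∈ S, D (g i) = l * g i) {a : ι → R} (ha : ∀ i ∈ s, a i ∈ S)
    (hind : LinearIndepOn K (fun i ↦ a i * g i) (s : Set ι))
    (hsum : ∑ i ∈ s, a i * g i ∈ S) : ∀ i ∈ s, g i ∈ quotientClosure S := by
  classical
  induction s using Finset.induction_on generalizing a with
  | empty => simp
  | insert n s hn ih =>
    rw [Finset.forall_mem_insert] at hg ha ⊢
    obtain ⟨⟨l, hl, hDgn⟩, hg⟩ := hg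
    obtain ⟨han, ha⟩ := ha
    rw [Finset.coe_insert] at hind
    choose! L hLS hL using hg
    have hw0 : a n * g n ≠ 0 := hind.ne_zero (Set.mem_insert n _)
    set p := D (a n) + a n * l with hp
    have hpS : p ∈ S := S.add_mem (hS _ han) (S.mul_mem han hl)
    have hDw : D (a n * g n) = p * g n := by
      simp only [Derivation.leibniz, smul_eq_mul, hDgn, hp]
      ring
    let E := firstOrderOperator D (a n) p
    let b i := a n * (D (a i) + a i * L i) - p * a i
    have hEg : ∀ i ∈ s, E (a i * g i) = b i * g i := fun i hi ↦ firstOrderOperator_mul (hL i hi)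
    have hb : ∀ i ∈ s, b i ∈ S := fun i hi ↦
      S.sub_mem (S.mul_mem han (S.add_mem (hS _ (ha i hi)) (S.mul_mem (ha i hi) (hLS i hi))))
        (S.mul_mem hpS (ha i hi))
    have hb_ind : LinearIndepOn K (fun i ↦ b i * g i) (s : Set ι) :=
      (linearIndepOn_comp_of_ker_le_span (Finset.mem_coe.not.2 hn) hind
        (ker_firstOrderOperator_le_span hD hw0 hDw)).congr hEg
    have hb_sum : ∑ i ∈ s, b i * g i ∈ S := by
      have hEw : E (a n * g n) = 0 := by rw [firstOrderOperator_apply, hDw]; ring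
      have hE_sum : E (∑ i ∈ insert n s, a i * g i) ∈ S :=
        S.sub_mem (S.mul_mem han (hS _ hsum)) (S.mul_mem hpS hsum)
      rwa [Finset.sum_insert hn, map_add, hEw, zero_add, map_sum, Finset.sum_congr rfl hEg]
        at hE_sum
    have hgs := ih (fun i hi ↦ ⟨L i, hLS i hi, hL i hi⟩) hb hb_ind hb_sum
    refine ⟨mem_quotientClosure_of_mul_mem han (left_ne_zero_of_mul hw0) ?_, hgs⟩
    rw [Finset.sum_insert hn] at hsum
    rw [← add_sub_cancel_right (a n * g n) (∑ i ∈ s, a i * g i)]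
    exact sub_mem (le_quotientClosure S hsum) <| Subalgebra.sum_mem _ fun i hi ↦
      mul_mem (le_quotientClosure S (ha i hi)) (hgs i hi)

end DifferentialAlgebra

section

open Asymptotics Filter InnerProductSpace Metric Real Set Topology ValueDistribution

/-- The algebra of entire functions. -/
def entire : Subalgebra ℂ (ℂ → ℂ) where
  carrier := {f | Differentiable ℂ f}
  mul_mem' := Differentiable.mul
  add_mem' := Differentiable.add
  algebraMap_mem' c := differentiable_const c

instance : NoZeroDivisors entire where
  eq_zero_or_eq_zero_of_mul_eq_zero {f g} hfg := by
    have := AnalyticOnNhd.eq_zero_or_eq_zero_of_mul_eq_zero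
      (fun z _ ↦ f.2.analyticAt z) (fun z _ ↦ g.2.analyticAt z)
      (fun z _ ↦ congrFun (congrArg Subtype.val hfg) z) isPreconnected_univ
    exact this.imp (fun h ↦ Subtype.ext <| funext fun z ↦ h z (mem_univ z))
      fun h ↦ Subtype.ext <| funext fun z ↦ h z (mem_univ z)

instance : IsDomain entire := NoZeroDivisors.to_isDomain _

/-- Complex differentiation, as a derivation of the algebra of entire functions. -/
noncomputable def entireDeriv : Derivation ℂ entire entire :=
  Derivation.mk'
    { toFun f := ⟨deriv f, f.2.deriv⟩
      map_add' f g := Subtype.ext <| funext fun z ↦ deriv_add (f.2 z) (g.2 z)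
      map_smul' c f := Subtype.ext <| funext fun z ↦ deriv_const_smul c (f.2 z) }
    fun f g ↦ Subtype.ext <| funext fun z ↦ by
      simpa [mul_comm, add_comm] using deriv_mul (f.2 z) (g.2 z)

theorem exists_eq_smul_of_mul_entireDeriv_eq {u w : entire} (hw0 : w ≠ 0)
    (h : w * entireDeriv u = entireDeriv w * u) : ∃ c : ℂ, u = c • w := by
  obtain ⟨z, hz⟩ : ∃ z, w.1 z ≠ 0 := Function.ne_iff.1 fun h ↦ hw0 (Subtype.ext h)
  obtain ⟨ε, hε, hball⟩ := isOpen_iff.1 (isOpen_ne_fun w.2.continuous continuous_const) z hz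
  have hderiv : EqOn (deriv (u.1 / w.1)) 0 (ball z ε) := fun y hy ↦ by
    have hy' : w.1 y * deriv u.1 y = deriv w.1 y * u.1 y := congrFun (congrArg Subtype.val h) y
    rw [deriv_div (u.2 y) (w.2 y) (hball hy), mul_comm (deriv u.1 y), hy', mul_comm, sub_self,
      zero_div, Pi.zero_apply]
  have hconst : EqOn u.1 ((u.1 z / w.1 z) • w.1) (ball z ε) := fun x hx ↦ by
    have := isOpen_ball.is_const_of_deriv_eq_zero (convex_ball z ε).isPreconnected
      (u.2.differentiableOn.div w.2.differentiableOn hball) hderiv hx (mem_ball_self hε)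
    exact (div_eq_iff (hball hx)).1 this
  exact ⟨u.1 z / w.1 z, Subtype.ext <| AnalyticOnNhd.eq_of_eventuallyEq
    (fun x _ ↦ u.2.analyticAt x) (fun x _ ↦ (w.2.const_smul _).analyticAt x)
    (hconst.eventuallyEq_of_mem (ball_mem_nhds z hε))⟩

theorem norm_circleAverage_le_circleAverage_norm {E : Type*} [NormedAddCommGroup E]
    [NormedSpace ℝ E] (f : ℂ → E) (c : ℂ) (R : ℝ) :
    ‖circleAverage f c R‖ ≤ circleAverage (fun z ↦ ‖f z‖) c R := by
  rw [circleAverage_def, circleAverage_def, norm_smul, smul_eq_mul,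
    Real.norm_of_nonneg (by positivity)]
  gcongr
  exact intervalIntegral.norm_integral_le_integral_norm two_pi_pos.le

theorem logDeriv_eq_deriv_of_re_eq_log_norm {f F : ℂ → ℂ} {U : Set ℂ} (hU : IsOpen U)
    (hUc : IsPreconnected U) (hf : DifferentiableOn ℂ f U) (hf0 : ∀ z ∈ U, f z ≠ 0)
    (hF : DifferentiableOn ℂ F U) (hre : ∀ z ∈ U, (F z).re = log ‖f z‖) {w : ℂ} (hw : w ∈ U) :
    logDeriv f w = deriv F w := by
  set h := fun z ↦ f z * Complex.exp (-F z)
  have hd : DifferentiableOn ℂ h U := hf.mul hF.neg.cexp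
  have hnorm : ∀ z ∈ U, ‖h z‖ = 1 := fun z hz ↦ by
    rw [norm_mul, Complex.norm_exp, Complex.neg_re, hre z hz, Real.exp_neg,
      Real.exp_log (norm_pos_iff.2 (hf0 z hz)), mul_inv_cancel₀ (norm_ne_zero_iff.2 (hf0 z hz))]
  have hconst : EqOn h (fun _ ↦ h w) U :=
    Complex.eqOn_of_isPreconnected_of_isMaxOn_norm hUc hU hd hw
      fun z hz ↦ ((hnorm z hz).trans (hnorm w hw).symm).le
  have hUw := hU.mem_nhds hw
  have hderiv : deriv h w = 0 :=
    (hconst.eventuallyEq_of_mem hUw).deriv_eq.trans (deriv_const w (h w))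
  have hf' := ((hf w hw).differentiableAt hUw).hasDerivAt
  have hF' := ((hF w hw).differentiableAt hUw).hasDerivAt
  have hh' := (hf'.mul hF'.fun_neg.cexp).deriv
  rw [show f * (fun z ↦ Complex.exp (-F z)) = h from rfl, hderiv] at hh'
  rw [logDeriv_apply, div_eq_iff (hf0 w hw)]
  exact mul_right_cancel₀ (Complex.exp_ne_zero (-F w)) (by linear_combination -hh')

theorem logDeriv_eq_circleAverage {f : ℂ → ℂ} {R : ℝ} (hf : AnalyticOnNhd ℂ f (closedBall 0 R))
    (hf0 : ∀ z ∈ closedBall 0 R, f z ≠ 0) {w : ℂ} (hw : w ∈ ball 0 R) :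
    logDeriv f w = circleAverage (fun ζ ↦ (2 * ζ / (ζ - w) ^ 2) • (log ‖f ζ‖ : ℂ)) 0 R := by
  have hlog : ContinuousOn (fun z ↦ log ‖f z‖) (sphere 0 |R|) := by
    rw [abs_of_pos (pos_of_mem_ball hw)]
    exact (hf.continuousOn.norm.log fun z hz ↦ norm_ne_zero_iff.2 (hf0 z hz)).mono
      sphere_subset_closedBall
  have hF : ∀ z ∈ ball (0 : ℂ) R, HasDerivAt
      (fun z ↦ circleAverage (fun ζ ↦ herglotzRieszKernel 0 z ζ • (log ‖f ζ‖ : ℂ)) 0 R) _ z :=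
    fun z hz ↦ hasDerivAt_circleAverage_herglotzRieszKernel_smul
      (Complex.continuous_ofReal.comp_continuousOn hlog).circleIntegrable' hz
  have hre : ∀ z ∈ ball (0 : ℂ) R,
      (circleAverage (fun ζ ↦ herglotzRieszKernel 0 z ζ • (log ‖f ζ‖ : ℂ)) 0 R).re =
        log ‖f z‖ := fun z hz ↦ by
    rw [re_circleAverage_herglotzRieszKernel_smul hlog.circleIntegrable' hz]
    exact HarmonicOnNhd.circleAverage_re_herglotzRieszKernel_smul
      (fun ζ hζ ↦ (hf ζ hζ).harmonicAt_log_norm (hf0 ζ hζ)) hz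
  rw [← (hF w hw).deriv]
  exact logDeriv_eq_deriv_of_re_eq_log_norm isOpen_ball (convex_ball 0 R).isPreconnected
    (hf.differentiableOn.mono ball_subset_closedBall)
    (fun z hz ↦ hf0 z (ball_subset_closedBall hz))
    (fun z hz ↦ (hF z hz).differentiableAt.differentiableWithinAt) hre hw

theorem norm_logDeriv_le_circleAverage {f : ℂ → ℂ} {R : ℝ}
    (hf : AnalyticOnNhd ℂ f (closedBall 0 R)) (hf0 : ∀ z ∈ closedBall 0 R, f z ≠ 0) {w : ℂ}
    (hw : w ∈ ball 0 R) :
    ‖logDeriv f w‖ ≤ 2 * R / (R - ‖w‖) ^ 2 * circleAverage (fun z ↦ |log ‖f z‖|) 0 R := by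
  have hR := abs_of_pos (pos_of_mem_ball hw)
  have hw' : 0 < R - ‖w‖ := sub_pos.2 (mem_ball_zero_iff.1 hw)
  have hdist : ∀ ζ ∈ sphere (0 : ℂ) |R|, R - ‖w‖ ≤ ‖ζ - w‖ := fun ζ hζ ↦ by
    rw [mem_sphere_zero_iff_norm, hR] at hζ
    exact hζ ▸ norm_sub_norm_le ζ w
  have hlog : ContinuousOn (fun z ↦ log ‖f z‖) (sphere 0 |R|) :=
    (hf.continuousOn.norm.log fun z hz ↦ norm_ne_zero_iff.2 (hf0 z hz)).mono
      (hR.symm ▸ sphere_subset_closedBall)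
  have hker : ContinuousOn (fun ζ ↦ 2 * ζ / (ζ - w) ^ 2) (sphere 0 |R|) :=
    (by fun_prop : ContinuousOn (fun ζ : ℂ ↦ 2 * ζ) _).div (by fun_prop) fun ζ hζ ↦
      pow_ne_zero 2 (norm_pos_iff.1 (hw'.trans_le (hdist ζ hζ)))
  rw [logDeriv_eq_circleAverage hf hf0 hw, ← smul_eq_mul (_ / _), ← circleAverage_fun_smul]
  refine (norm_circleAverage_le_circleAverage_norm _ 0 R).trans (circleAverage_mono ?_ ?_ ?_)
  · exact (hker.smul (Complex.continuous_ofReal.comp_continuousOn hlog)).norm.circleIntegrable'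
  · exact (hlog.abs.const_smul (_ : ℝ)).circleIntegrable'
  · intro ζ hζ
    have hζR : ‖ζ‖ = R := by rwa [mem_sphere_zero_iff_norm, hR] at hζ
    simp only [norm_div, norm_mul, norm_pow, Complex.norm_ofNat, Complex.norm_real, norm_eq_abs,
      smul_eq_mul, hζR]
    have := pos_of_mem_ball hw
    gcongr
    exact hdist ζ hζ

theorem circleAverage_abs_log_norm {f : ℂ → ℂ} (hf : Differentiable ℂ f) (hf0 : ∀ z, f z ≠ 0)
    (R : ℝ) : circleAverage (fun z ↦ |log ‖f z‖|) 0 R = 2 * proximity f ⊤ R - log ‖f 0‖ := by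
  have hlog : Continuous fun z ↦ log ‖f z‖ :=
    hf.continuous.norm.log fun z ↦ norm_ne_zero_iff.2 (hf0 z)
  have hpos : CircleIntegrable (fun z ↦ log⁺ ‖f z‖) 0 R :=
    ((continuous_const.max hlog).congr fun z ↦ rfl).continuousOn.circleIntegrable'
  have hmean : circleAverage (fun z ↦ log ‖f z‖) 0 R = log ‖f 0‖ :=
    InnerProductSpace.HarmonicOnNhd.circleAverage_eq fun z _ ↦
      (hf.analyticAt z).harmonicAt_log_norm (hf0 z)
  have habs : (fun z ↦ |log ‖f z‖|) = (2 : ℝ) • (fun z ↦ log⁺ ‖f z‖) - fun z ↦ log ‖f z‖ := by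
    ext z
    simp only [Pi.sub_apply, Pi.smul_apply, smul_eq_mul, posLog]
    grind
  rw [habs, circleAverage_sub (hpos.const_smul) hlog.continuousOn.circleIntegrable',
    circleAverage_smul, hmean, proximity_top, smul_eq_mul]

theorem norm_logDeriv_le {f : ℂ → ℂ} (hf : Differentiable ℂ f) (hf0 : ∀ z, f z ≠ 0) {R : ℝ}
    {w : ℂ} (hw : w ∈ ball 0 R) :
    ‖logDeriv f w‖ ≤ 2 * R / (R - ‖w‖) ^ 2 * (2 * proximity f ⊤ R - log ‖f 0‖) := by
  rw [← circleAverage_abs_log_norm hf hf0]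
  exact norm_logDeriv_le_circleAverage (fun z _ ↦ hf.analyticAt z) (fun z _ ↦ hf0 z) hw

theorem exists_eq_const_of_proximity_isLittleO {f : ℂ → ℂ} (hf : Differentiable ℂ f)
    (hf0 : ∀ z, f z ≠ 0) (hT : proximity f ⊤ =o[atTop] (id : ℝ → ℝ)) :
    ∃ c, ∀ z, f z = c := by
  refine ⟨f 0, fun z ↦ is_const_of_deriv_eq_zero hf (fun z ↦ ?_) z 0⟩
  have hquot : Tendsto (fun R : ℝ ↦ R / (R - ‖z‖)) atTop (𝓝 1) := by
    have hrem : Tendsto (fun R : ℝ ↦ 1 + ‖z‖ / (R - ‖z‖)) atTop (𝓝 (1 + 0)) :=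
      tendsto_const_nhds.add <| tendsto_const_nhds.div_atTop <|
        tendsto_atTop_add_const_right _ _ tendsto_id
    refine (add_zero (1 : ℝ) ▸ hrem).congr' ?_
    filter_upwards [eventually_gt_atTop ‖z‖] with R hR
    field_simp [(sub_pos.2 hR).ne']
    ring
  have hlim := ((hquot.pow 2).const_mul 2).mul
    ((hT.tendsto_div_nhds_zero.const_mul 2).sub
      ((tendsto_const_nhds (x := log ‖f 0‖)).div_atTop tendsto_id))
  have hle : ‖logDeriv f z‖ ≤ 0 := by
    refine ge_of_tendsto (by simpa using hlim) ?_
    filter_upwards [eventually_gt_atTop ‖z‖] with R hR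
    have hR0 := (norm_nonneg z).trans_lt hR
    refine (norm_logDeriv_le hf hf0 (mem_ball_zero_iff.2 hR)).trans_eq ?_
    have := (sub_pos.2 hR).ne'
    field_simp
  have h0 := norm_le_zero_iff.1 hle
  rwa [logDeriv_apply, div_eq_zero_iff, or_iff_left (hf0 z)] at h0

theorem characteristic_top_eq_proximity {f : ℂ → ℂ} (hf : Differentiable ℂ f) :
    characteristic f ⊤ = proximity f ⊤ := by
  have hpoles : (MeromorphicOn.divisor f univ)⁻ = 0 := by
    rw [negPart_eq_zero]
    exact MeromorphicOn.AnalyticOnNhd.divisor_nonneg fun z _ ↦ hf.analyticAt z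
  rw [characteristic, logCounting_top, hpoles, map_zero, add_zero]

theorem proximity_monotoneOn {f : ℂ → ℂ} (hf : Differentiable ℂ f) :
    MonotoneOn (proximity f ⊤) (Ioi 0) := by
  rw [← characteristic_top_eq_proximity hf]
  exact characteristic_monotoneOn fun z ↦ (hf.analyticAt z).meromorphicAt

theorem exists_proximity_inv_le {f : ℂ → ℂ} (hf : Differentiable ℂ f) :
    ∃ C : ℝ, ∀ R, 1 ≤ R → proximity f⁻¹ ⊤ R ≤ proximity f ⊤ R + C := by
  refine ⟨max |log ‖f 0‖| |log ‖meromorphicTrailingCoeffAt f 0‖|, fun R hR ↦ ?_⟩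
  have hfirst := (abs_le.1 (characteristic_sub_characteristic_inv_le
    (fun z ↦ (hf.analyticAt z).meromorphicAt) (R := R))).1
  have hcount : 0 ≤ logCounting f⁻¹ ⊤ R := logCounting_nonneg hR
  rw [characteristic_top_eq_proximity hf, characteristic, Pi.add_apply] at hfirst
  linarith

/-- A quantity comparable to `R + T R + 1 / (R - r)`; estimates from a circle of radius `R` on one
of radius `r < R` are expressed through its powers. The summand `3` makes its logarithm at least
`1`. -/
noncomputable def growthScale (T : ℝ → ℝ) (r R : ℝ) : ℝ := 3 + R + |T R| + (R - r)⁻¹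

theorem three_le_growthScale (T : ℝ → ℝ) {r R : ℝ} (hR : 0 ≤ R) (hrR : r < R) :
    3 ≤ growthScale T r R := by
  have := inv_pos.2 (sub_pos.2 hrR)
  have := abs_nonneg (T R)
  unfold growthScale
  linarith

theorem le_growthScale (T : ℝ → ℝ) {r R : ℝ} (hrR : r < R) : R ≤ growthScale T r R := by
  have := inv_pos.2 (sub_pos.2 hrR)
  have := abs_nonneg (T R)
  unfold growthScale
  linarith

theorem apply_le_growthScale (T : ℝ → ℝ) {r R : ℝ} (hR : 0 ≤ R) (hrR : r < R) :
    T R ≤ growthScale T r R := by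
  have := inv_pos.2 (sub_pos.2 hrR)
  have := le_abs_self (T R)
  unfold growthScale
  linarith

theorem inv_sub_le_growthScale (T : ℝ → ℝ) {r R : ℝ} (hR : 0 ≤ R) :
    (R - r)⁻¹ ≤ growthScale T r R := by
  have := abs_nonneg (T R)
  unfold growthScale
  linarith

theorem growthScale_le_sq (T : ℝ → ℝ) {r s R : ℝ} (hR : 0 ≤ R) (hrR : r < R)
    (hs : s ≤ (r + R) / 2) : growthScale T s R ≤ growthScale T r R ^ 2 := by
  have hinv : (R - s)⁻¹ ≤ 2 * (R - r)⁻¹ := by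
    rw [← div_eq_mul_inv, ← inv_div]
    have := sub_pos.2 hrR
    gcongr
    linarith
  have h3 := three_le_growthScale T hR hrR
  have hdouble : growthScale T s R ≤ 2 * growthScale T r R := by
    have := abs_nonneg (T R)
    unfold growthScale
    linarith
  nlinarith

theorem exists_mul_pow_le_pow (C : ℝ) (k : ℕ) : ∃ n : ℕ, ∀ x : ℝ, 2 ≤ x → C * x ^ k ≤ x ^ n := by
  obtain ⟨n, hn⟩ := pow_unbounded_of_one_lt C one_lt_two
  refine ⟨n + k, fun x hx ↦ ?_⟩
  rw [pow_add]
  gcongr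
  exact hn.le.trans (by gcongr)

theorem sq_mul_le_of_sq_le_growthScale {T : ℝ → ℝ} {A t d W : ℝ} (hA : 0 ≤ A) (hd : 0 < d)
    (hd1 : d ≤ 1) (ht : 0 ≤ t + d) (hT : 0 ≤ T (t + d / 2)) (hW : T (t + d / 2) * (d / 2) ≤ W)
    (h : T t ^ 2 ≤ A * growthScale T t (t + d / 2)) :
    (T t * d) ^ 2 ≤ A * (5 + (t + d) + 2 * W) := by
  have hradius : d ^ 2 * (3 + (t + d / 2)) ≤ 3 + (t + d) :=
    (mul_le_of_le_one_left (by linarith) (pow_le_one₀ hd.le hd1)).trans (by linarith)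
  have hvalue : d ^ 2 * T (t + d / 2) ≤ 2 * W := by
    have := mul_le_of_le_one_left (by positivity : 0 ≤ T (t + d / 2) * (d / 2)) hd1
    linarith
  calc (T t * d) ^ 2 = d ^ 2 * T t ^ 2 := by ring
    _ ≤ d ^ 2 * (A * growthScale T t (t + d / 2)) := by gcongr
    _ = A * (d ^ 2 * (3 + (t + d / 2)) + d ^ 2 * T (t + d / 2) + 2 * d) := by
        rw [growthScale, abs_of_nonneg hT, add_sub_cancel_left]
        field_simp
    _ ≤ A * (5 + (t + d) + 2 * W) := mul_le_mul_of_nonneg_left (by linarith) hA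

-- With `G = sup T(t) (r + 1 - t)` over `r ≤ t < r + 1`, the choice `R = (t + r + 1) / 2` bounds the
-- weighted `T R` by `2 G`, so the hypothesis turns into a quadratic inequality for `G ≥ T r`.
theorem sq_le_of_sq_le_growthScale {T : ℝ → ℝ} (hT : ∀ r, 0 ≤ T r) (hmono : MonotoneOn T (Ici 1))
    {A : ℝ} (hA : 0 ≤ A) (h : ∀ r R, 1 ≤ r → r < R → T r ^ 2 ≤ A * growthScale T r R) {r : ℝ}
    (hr : 1 ≤ r) : T r ^ 2 ≤ 2 * A * (6 + r) + 4 * A ^ 2 := by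
  set G := sSup ((fun t ↦ T t * (r + 1 - t)) '' Ico r (r + 1))
  have hbdd : BddAbove ((fun t ↦ T t * (r + 1 - t)) '' Ico r (r + 1)) := by
    refine ⟨T (r + 1), ?_⟩
    rintro - ⟨t, ⟨hrt, htr⟩, rfl⟩
    have := hmono (hr.trans hrt) (hr.trans (by linarith)) htr.le
    nlinarith [hT t]
  have hle : ∀ t ∈ Ico r (r + 1), T t * (r + 1 - t) ≤ G := fun t ht ↦
    le_csSup hbdd (mem_image_of_mem _ ht)
  have hr_mem : r ∈ Ico r (r + 1) := ⟨le_rfl, lt_add_one r⟩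
  have hTG : T r ≤ G := by simpa using hle r hr_mem
  have hstep : ∀ t ∈ Ico r (r + 1), (T t * (r + 1 - t)) ^ 2 ≤ A * (6 + r + 2 * G) := by
    rintro t ⟨hrt, htr⟩
    have hmid := hle (t + (r + 1 - t) / 2) ⟨by linarith, by linarith⟩
    convert sq_mul_le_of_sq_le_growthScale hA (sub_pos.2 htr) (by linarith) (by linarith) (hT _)
      (hmid.trans' (by ring_nf; rfl)) (h t _ (hr.trans hrt) (by linarith)) using 2
    ring
  have hG : G ≤ √(A * (6 + r + 2 * G)) := csSup_le ⟨_, mem_image_of_mem _ hr_mem⟩ <| by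
    rintro - ⟨t, ht, rfl⟩
    exact le_sqrt_of_sq_le (hstep t ht)
  have hG0 := (hT r).trans hTG
  have hG_sq : G ^ 2 ≤ A * (6 + r + 2 * G) := (le_sqrt hG0 (by positivity)).1 hG
  nlinarith [hT r, sq_nonneg (G - 2 * A)]

theorem isLittleO_of_sq_le_growthScale {T : ℝ → ℝ} (hT : ∀ r, 0 ≤ T r)
    (hmono : MonotoneOn T (Ici 1)) {A : ℝ} (hA : 0 ≤ A)
    (h : ∀ r R, 1 ≤ r → r < R → T r ^ 2 ≤ A * growthScale T r R) :
    T =o[atTop] (id : ℝ → ℝ) := by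
  have hO : (fun r ↦ T r ^ 2) =O[atTop] (fun r : ℝ ↦ r ^ 1) := by
    refine IsBigO.of_bound (14 * A + 4 * A ^ 2) ?_
    filter_upwards [eventually_ge_atTop 1] with r hr
    rw [norm_of_nonneg (sq_nonneg _), norm_of_nonneg (by positivity)]
    have := sq_le_of_sq_le_growthScale hT hmono hA h hr
    nlinarith [sq_nonneg A]
  exact (hO.trans_isLittleO (isLittleO_pow_pow_atTop_of_lt one_lt_two)).of_pow two_ne_zero

theorem sq_log_le {x : ℝ} (hx : 1 ≤ x) : log x ^ 2 ≤ 4 * x := by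
  have hsqrt : log √x ≤ √x := log_le_self (sqrt_nonneg x)
  rw [log_sqrt (by linarith)] at hsqrt
  have := log_nonneg hx
  nlinarith [sq_sqrt (zero_le_one.trans hx)]

theorem isLittleO_of_le_log_growthScale {T : ℝ → ℝ} (hT : ∀ r, 0 ≤ T r)
    (hmono : MonotoneOn T (Ici 1)) {K : ℝ}
    (h : ∀ r R, 1 ≤ r → r < R → T r ≤ K * log (growthScale T r R)) :
    T =o[atTop] (id : ℝ → ℝ) := by
  refine isLittleO_of_sq_le_growthScale hT hmono (A := 4 * K ^ 2) (by positivity)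
    fun r R hr hrR ↦ ?_
  have h3 := three_le_growthScale T (by linarith : 0 ≤ R) hrR
  calc T r ^ 2 ≤ (K * log (growthScale T r R)) ^ 2 := by
        have := hT r
        gcongr
        exact h r R hr hrR
    _ = K ^ 2 * log (growthScale T r R) ^ 2 := mul_pow ..
    _ ≤ K ^ 2 * (4 * growthScale T r R) := by
        gcongr
        exact sq_log_le (by linarith)
    _ = 4 * K ^ 2 * growthScale T r R := by ring

/-- The entire functions whose modulus on the circle of radius `r` is at most a power of
`growthScale T r R`, uniformly in `r < R`. -/
def growthAlgebra (T : ℝ → ℝ) : Subalgebra ℂ entire where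
  carrier := {u | ∃ k : ℕ, ∀ z R, ‖z‖ < R → ‖u.1 z‖ ≤ growthScale T ‖z‖ R ^ k}
  mul_mem' := by
    rintro u v ⟨k, hu⟩ ⟨l, hv⟩
    refine ⟨k + l, fun z R hz ↦ ?_⟩
    have h0 := (norm_nonneg _).trans (hu z R hz)
    rw [pow_add]
    exact (norm_mul_le _ _).trans (mul_le_mul (hu z R hz) (hv z R hz) (norm_nonneg _) h0)
  add_mem' := by
    rintro u v ⟨k, hu⟩ ⟨l, hv⟩
    obtain ⟨n, hn⟩ := exists_mul_pow_le_pow 2 (max k l)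
    refine ⟨n, fun z R hz ↦ ?_⟩
    have h3 := three_le_growthScale T ((norm_nonneg z).trans hz.le) hz
    calc ‖u.1 z + v.1 z‖ ≤ growthScale T ‖z‖ R ^ k + growthScale T ‖z‖ R ^ l :=
          norm_add_le_of_le (hu z R hz) (hv z R hz)
      _ ≤ growthScale T ‖z‖ R ^ max k l + growthScale T ‖z‖ R ^ max k l := by
          have h1 : 1 ≤ growthScale T ‖z‖ R := by linarith
          gcongr
          exacts [le_max_left k l, le_max_right k l]
      _ ≤ growthScale T ‖z‖ R ^ n := by
          rw [← two_mul]
          exact hn _ (by linarith)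
  algebraMap_mem' c := by
    obtain ⟨n, hn⟩ := exists_mul_pow_le_pow ‖c‖ 0
    refine ⟨n, fun z R hz ↦ ?_⟩
    have h3 := three_le_growthScale T ((norm_nonneg z).trans hz.le) hz
    simpa using hn _ (by linarith)

theorem mem_growthAlgebra_of_norm_le {T : ℝ → ℝ} {u : entire} (C : ℝ) (k : ℕ)
    (h : ∀ z R, ‖z‖ < R → ‖u.1 z‖ ≤ C * growthScale T ‖z‖ R ^ k) : u ∈ growthAlgebra T := by
  obtain ⟨n, hn⟩ := exists_mul_pow_le_pow C k
  refine ⟨n, fun z R hz ↦ (h z R hz).trans (hn _ ?_)⟩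
  have h3 := three_le_growthScale T ((norm_nonneg z).trans hz.le) hz
  linarith

theorem entireDeriv_mem_growthAlgebra {T : ℝ → ℝ} {u : entire} (hu : u ∈ growthAlgebra T) :
    entireDeriv u ∈ growthAlgebra T := by
  obtain ⟨k, hu⟩ := hu
  refine mem_growthAlgebra_of_norm_le 2 (2 * k + 1) fun z R hz ↦ ?_
  have hR := (norm_nonneg z).trans hz.le
  have hρ : 0 < (R - ‖z‖) / 2 := by linarith
  have hσ := three_le_growthScale T hR hz
  have hbound : ∀ ζ ∈ sphere z ((R - ‖z‖) / 2), ‖u.1 ζ‖ ≤ growthScale T ‖z‖ R ^ (2 * k) := by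
    intro ζ hζ
    have hnorm : ‖ζ‖ ≤ (‖z‖ + R) / 2 := by
      have := norm_le_norm_add_norm_sub' ζ z
      rw [mem_sphere_iff_norm.1 hζ] at this
      linarith
    have hζR : ‖ζ‖ < R := by linarith
    rw [pow_mul]
    have := three_le_growthScale T hR hζR
    exact (hu ζ R hζR).trans (pow_le_pow_left₀ (by linarith) (growthScale_le_sq T hR hz hnorm) k)
  calc ‖deriv u.1 z‖ ≤ growthScale T ‖z‖ R ^ (2 * k) / ((R - ‖z‖) / 2) :=
        Complex.norm_deriv_le_of_forall_mem_sphere_norm_le hρ u.2.diffContOnCl hbound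
    _ = 2 * (growthScale T ‖z‖ R ^ (2 * k) * (R - ‖z‖)⁻¹) := by
        rw [div_div_eq_mul_div, div_eq_mul_inv, mul_comm _ (2 : ℝ), mul_assoc]
    _ ≤ 2 * growthScale T ‖z‖ R ^ (2 * k + 1) := by
        rw [pow_succ]
        gcongr
        exact inv_sub_le_growthScale T hR

theorem logDeriv_mem_growthAlgebra {T : ℝ → ℝ} {f : ℂ → ℂ} (hf : Differentiable ℂ f)
    (hf0 : ∀ z, f z ≠ 0) (hT : ∀ R, proximity f ⊤ R ≤ T R) :
    (⟨logDeriv f, hf.deriv.div hf hf0⟩ : entire) ∈ growthAlgebra T := by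
  refine mem_growthAlgebra_of_norm_le (2 * (2 + |log ‖f 0‖|)) 4 fun z R hz ↦ ?_
  have hR := (norm_nonneg z).trans hz.le
  set σ := growthScale T ‖z‖ R
  have hσ : 3 ≤ σ := three_le_growthScale T hR hz
  have hvalue : 2 * proximity f ⊤ R - log ‖f 0‖ ≤ (2 + |log ‖f 0‖|) * σ := by
    have hprox : proximity f ⊤ R ≤ σ := (hT R).trans (apply_le_growthScale T hR hz)
    have hlog := neg_abs_le (log ‖f 0‖)
    have := le_mul_of_one_le_right (abs_nonneg (log ‖f 0‖)) (by linarith : 1 ≤ σ)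
    linarith
  calc ‖logDeriv f z‖ ≤ 2 * R / (R - ‖z‖) ^ 2 * (2 * proximity f ⊤ R - log ‖f 0‖) :=
        norm_logDeriv_le hf hf0 (mem_ball_zero_iff.2 hz)
    _ ≤ 2 * σ * σ ^ 2 * ((2 + |log ‖f 0‖|) * σ) := by
        rw [div_eq_mul_inv, ← inv_pow]
        have := inv_pos.2 (sub_pos.2 hz)
        have hnonneg : 0 ≤ 2 * proximity f ⊤ R - log ‖f 0‖ := by
          rw [← circleAverage_abs_log_norm hf hf0]
          exact circleAverage_nonneg_of_nonneg fun _ _ ↦ abs_nonneg _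
        gcongr
        · exact le_growthScale T hz
        · exact inv_sub_le_growthScale T hR
    _ = 2 * (2 + |log ‖f 0‖|) * σ ^ 4 := by ring

theorem proximity_le_of_mem_growthAlgebra {T : ℝ → ℝ} {u : entire} (hu : u ∈ growthAlgebra T) :
    ∃ k : ℕ, ∀ r R, 0 ≤ r → r < R → proximity u.1 ⊤ r ≤ k * log (growthScale T r R) := by
  obtain ⟨k, hk⟩ := hu
  refine ⟨k, fun r R hr hrR ↦ ?_⟩
  have hσ := three_le_growthScale T (hr.trans hrR.le) hrR
  have hmer : Meromorphic u.1 := fun z ↦ (u.2.analyticAt z).meromorphicAt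
  rw [proximity_top]
  refine circleAverage_mono_on_of_le_circle hmer.meromorphicOn.circleIntegrable_posLog_norm
    fun z hz ↦ ?_
  rw [mem_sphere_zero_iff_norm, abs_of_nonneg hr] at hz
  calc log⁺ ‖u.1 z‖ ≤ log⁺ (growthScale T r R ^ k) :=
        posLog_le_posLog (norm_nonneg _) (hz ▸ hk z R (hz ▸ hrR))
    _ = k * log (growthScale T r R) := by
        rw [posLog_pow, posLog_eq_log (by rw [abs_of_nonneg] <;> linarith)]

theorem proximity_le_of_mem_quotientClosure {T : ℝ → ℝ} {f : entire}
    (hf : f ∈ quotientClosure (growthAlgebra T)) :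
    ∃ K, ∀ r R, 1 ≤ r → r < R → proximity f.1 ⊤ r ≤ K * log (growthScale T r R) := by
  obtain ⟨a, ha, ha0, hb⟩ := hf
  obtain ⟨k, hk⟩ := proximity_le_of_mem_growthAlgebra ha
  obtain ⟨l, hl⟩ := proximity_le_of_mem_growthAlgebra hb
  obtain ⟨C, hC⟩ := exists_proximity_inv_le a.2
  have hmer (u : entire) : Meromorphic u.1 := fun z ↦ (u.2.analyticAt z).meromorphicAt
  have hquot : f.1 =ᶠ[codiscrete ℂ] (a * f).1 * a.1⁻¹ := by
    obtain ⟨z₀, hz₀⟩ : ∃ z, a.1 z ≠ 0 := Function.ne_iff.1 fun h ↦ ha0 (Subtype.ext h)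
    filter_upwards [AnalyticOnNhd.preimage_zero_mem_codiscrete
      (fun z _ ↦ a.2.analyticAt z) hz₀] with z hz
    exact (mul_inv_cancel_right₀ (a := f.1 z) hz).symm.trans <|
      congrArg (· * (a.1 z)⁻¹) (mul_comm _ _)
  refine ⟨l + k + |C|, fun r R hr hrR ↦ ?_⟩
  have hr0 := zero_le_one.trans hr
  have hlog : 1 ≤ log (growthScale T r R) := by
    rw [le_log_iff_exp_le] <;>
      linarith [three_le_growthScale T (hr0.trans hrR.le) hrR, exp_one_lt_three]
  rw [proximity_congr_codiscrete hquot (by linarith)]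
  calc proximity ((a * f).1 * a.1⁻¹) ⊤ r ≤ proximity (a * f).1 ⊤ r + proximity a.1⁻¹ ⊤ r :=
        proximity_mul_top_le (hmer _) (hmer a).inv r
    _ ≤ l * log (growthScale T r R) + (k * log (growthScale T r R) + |C|) := by
        gcongr
        · exact hl r R hr0 hrR
        · exact (hC r hr).trans (add_le_add (hk r R hr0 hrR) (le_abs_self C))
    _ ≤ (l + k + |C|) * log (growthScale T r R) := by
        have := le_mul_of_one_le_right (abs_nonneg C) hlog
        linarith

theorem exists_eq_const_of_sum_eq_one {ι : Type*} {s : Finset ι} {f : ι → ℂ → ℂ}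
    (hf : ∀ i, Differentiable ℂ (f i)) (hf0 : ∀ i ∈ s, ∀ z, f i z ≠ 0)
    (hind : LinearIndepOn ℂ f (s : Set ι)) (hsum : ∑ i ∈ s, f i = 1) :
    ∀ i ∈ s, ∃ c, ∀ z, f i z = c := by
  let T (r : ℝ) := ∑ i ∈ s, proximity (f i) ⊤ r
  have hT (r : ℝ) : 0 ≤ T r := Finset.sum_nonneg fun i _ ↦ proximity_nonneg r
  have hfT : ∀ i ∈ s, ∀ r, proximity (f i) ⊤ r ≤ T r := fun i hi r ↦
    Finset.single_le_sum (f := fun i ↦ proximity (f i) ⊤ r) (fun i _ ↦ proximity_nonneg r) hi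
  let g (i : ι) : entire := ⟨f i, hf i⟩
  have hg_ind : LinearIndepOn ℂ (fun i ↦ 1 * g i) (s : Set ι) := by
    simp only [one_mul]
    exact LinearIndependent.of_comp entire.val.toLinearMap hind
  have hg_sum : ∑ i ∈ s, 1 * g i ∈ growthAlgebra T := by
    rw [show ∑ i ∈ s, 1 * g i = 1 from Subtype.ext (by simpa [g] using hsum)]
    exact one_mem _
  have hg_mem : ∀ i ∈ s, g i ∈ quotientClosure (growthAlgebra T) :=
    mem_quotientClosure_of_sum_mem entireDeriv
      (fun _ _ ↦ exists_eq_smul_of_mul_entireDeriv_eq) (fun _ ↦ entireDeriv_mem_growthAlgebra)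
      (fun i hi ↦ ⟨_, logDeriv_mem_growthAlgebra (hf i) (hf0 i hi) (hfT i hi),
        Subtype.ext <| funext fun z ↦ (div_mul_cancel₀ _ (hf0 i hi z)).symm⟩)
      (fun _ _ ↦ one_mem _) hg_ind hg_sum
  choose! K hK using fun i hi ↦ proximity_le_of_mem_quotientClosure (hg_mem i hi)
  have hT_log (r R : ℝ) (hr : 1 ≤ r) (hrR : r < R) :
      T r ≤ (∑ i ∈ s, K i) * log (growthScale T r R) := by
    rw [Finset.sum_mul]
    exact Finset.sum_le_sum fun i hi ↦ hK i hi r R hr hrR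
  have hT_mono : MonotoneOn T (Ici 1) := fun r hr R hR hrR ↦ Finset.sum_le_sum fun i _ ↦
    (proximity_monotoneOn (hf i)).mono (Ici_subset_Ioi.2 zero_lt_one) hr hR hrR
  have hT_small := isLittleO_of_le_log_growthScale hT hT_mono hT_log
  refine fun i hi ↦ exists_eq_const_of_proximity_isLittleO (hf i) (hf0 i hi)
    (IsBigO.trans_isLittleO (.of_norm_le fun r ↦ ?_) hT_small)
  rw [norm_of_nonneg (proximity_nonneg r)]
  exact hfT i hi r

theorem exists_eq_const_mul_of_mem_span {ι : Type*} {s : Set ι} {g : ι → ℂ → ℂ}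
    (hg : ∀ i, Differentiable ℂ (g i)) (hg0 : ∀ i z, g i z ≠ 0) (hind : LinearIndepOn ℂ g s)
    {j : ι} (hj : g j ∈ Submodule.span ℂ (g '' s)) : ∃ i ∈ s, ∃ c : ℂ, ∀ z, g i z = c * g j z := by
  obtain ⟨l, hls, hl⟩ := (Finsupp.mem_span_image_iff_linearCombination ℂ).1 hj
  let f (i : ι) : ℂ → ℂ := l i • (g i / g j)
  have hf (i : ι) : Differentiable ℂ (f i) := ((hg i).div (hg j) (hg0 j)).const_smul _
  have hf0 : ∀ i ∈ l.support, ∀ z, f i z ≠ 0 := fun i hi z ↦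
    mul_ne_zero (Finsupp.mem_support_iff.1 hi) (div_ne_zero (hg0 i z) (hg0 j z))
  have hgf (i : ι) : g j * f i = l i • g i := by
    ext z
    simp only [f, Pi.mul_apply, Pi.smul_apply, Pi.div_apply, smul_eq_mul]
    field_simp [hg0 j z]
  have hlg_ind : LinearIndepOn ℂ (fun i ↦ l i • g i) (l.support : Set ι) :=
    (hind.mono hls).units_smul fun i ↦ Units.mk0 (l i) (Finsupp.mem_support_iff.1 i.2)
  have hf_ind : LinearIndepOn ℂ f (l.support : Set ι) := by
    rw [← funext hgf] at hlg_ind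
    exact LinearIndependent.of_comp (LinearMap.mulLeft ℂ (g j)) hlg_ind
  have hsum : ∑ i ∈ l.support, f i = 1 := by
    ext z
    refine mul_left_cancel₀ (hg0 j z) ?_
    have := congrFun hl z
    rw [Finsupp.linearCombination_apply, Finsupp.sum, Finset.sum_congr rfl fun i _ ↦ (hgf i).symm,
      ← Finset.mul_sum] at this
    simpa using this
  obtain ⟨i, hi⟩ : l.support.Nonempty := Finset.nonempty_of_sum_ne_zero (hsum.trans_ne one_ne_zero)
  obtain ⟨c, hc⟩ := exists_eq_const_of_sum_eq_one hf hf0 hf_ind hsum i hi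
  have hli := Finsupp.mem_support_iff.1 hi
  refine ⟨i, hls hi, (l i)⁻¹ * c, fun z ↦ ?_⟩
  rw [← hc z]
  simp only [f, Pi.smul_apply, Pi.div_apply, smul_eq_mul]
  field_simp [hg0 j z]

theorem stmt_11_general {ι : Type*} {g : ι → ℂ → ℂ} (hg : ∀ i, Differentiable ℂ (g i))
    (hg0 : ∀ i z, g i z ≠ 0) (hdep : ¬ LinearIndependent ℂ g) :
    ∃ i j, i ≠ j ∧ ∃ c : ℂ, c ≠ 0 ∧ ∀ z, g i z = c * g j z := by
  obtain ⟨s, hs, hmax⟩ := exists_maximal_linearIndepOn ℂ g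
  obtain ⟨j, hj⟩ : ∃ j, j ∉ s := by
    by_contra! h
    rw [eq_univ_of_forall h, linearIndepOn_univ_iff] at hs
    exact hdep hs
  obtain ⟨a, ha, haj⟩ := hmax j hj
  obtain ⟨i, hi, c, hc⟩ := exists_eq_const_mul_of_mem_span hg hg0 hs
    ((Submodule.smul_mem_iff _ ha).1 haj)
  refine ⟨i, j, ne_of_mem_of_not_mem hi hj, c, ?_, hc⟩
  rintro rfl
  exact hg0 i 0 (by rw [hc, zero_mul])

end

/-- classical Borel theorem: if `g_1, …, g_m` are nowhere-vanishing
entire functions with `g_1 + ⋯ + g_m ≡ 0` and `m ≥ 3`, then some ratio `g_i / g_j`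
(`i ≠ j`) is a nonzero constant. -/
theorem stmt_11 (m : ℕ) (hm : 3 ≤ m) (g : Fin m → ℂ → ℂ)
    (hg : ∀ i, Differentiable ℂ (g i)) (hg0 : ∀ i z, g i z ≠ 0)
    (hrel : ∀ z : ℂ, ∑ i, g i z = 0) :
    ∃ i j : Fin m, i ≠ j ∧ ∃ c : ℂ, c ≠ 0 ∧ ∀ z, g i z = c * g j z :=
  stmt_11_general hg hg0 fun h ↦ one_ne_zero <| Fintype.linearIndependent_iff.1 h (fun _ ↦ 1)
    (funext fun z ↦ by simpa using hrel z) ⟨0, by omega⟩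
end
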